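/- arXiv:1007.4455 — 3 statements merged into one kernel-verified Lean document; each statement's English description precedes it below -/
import Mathlib

section
/- Let A generate an α-times resolvent family {S_α(t)}_{t≥0} on X, where 1 < α < 2, and let P_α(t)x = ∫_0^t g_{α−1}(t−s)S_α(s)x ds. Then for every x ∈ X and every t ≥ 0, the element ∫_0^t g_α(t−s) s P_α(s)x ds belongs to D(A) and A(∫_0^t g_α(t−s) s P_α(s)x ds) = −α (g_α*S_α)(t)x + t P_α(t)x, where (g_α*S_α)(t)x = ∫_0^t g_α(t−s)S_α(s)x ds. -/
open MeasureTheory Set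

/-- `g β t = t^(β-1)/Γ(β)`. -/
noncomputable def g (β t : ℝ) : ℝ := t ^ (β - 1) / Real.Gamma β

/-- `Pa α S t x = (g_{α-1} * S)(t) x = ∫_0^t g_{α-1}(t-s) S(s) x ds`. -/
noncomputable def Pa {X : Type*} [NormedAddCommGroup X] [NormedSpace ℂ X]
    (α : ℝ) (S : ℝ → X →L[ℂ] X) (t : ℝ) (x : X) : X :=
  ∫ s in (0:ℝ)..t, g (α - 1) (t - s) • S s x

lemma g_meas (β : ℝ) : Measurable (g β) := by
  unfold g; fun_prop

lemma g_nonneg {β : ℝ} (hβ : 0 < β) {u : ℝ} (hu : 0 ≤ u) : 0 ≤ g β u :=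
  div_nonneg (Real.rpow_nonneg hu _) (Real.Gamma_pos_of_pos hβ).le

lemma g_pos {β : ℝ} (hβ : 0 < β) {u : ℝ} (hu : 0 < u) : 0 < g β u :=
  div_pos (Real.rpow_pos_of_pos hu _) (Real.Gamma_pos_of_pos hβ)

lemma g_succ {β : ℝ} (hβ : 0 < β) {u : ℝ} (hu : 0 ≤ u) : u * g β u = β * g (β + 1) u := by
  have hG := (Real.Gamma_pos_of_pos hβ).ne'
  unfold g
  rw [Real.Gamma_add_one hβ.ne']
  rcases hu.eq_or_lt with rfl | hu
  · simp [Real.zero_rpow hβ.ne']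
  · rw [show β + 1 - 1 = (β - 1) + 1 by ring, Real.rpow_add_one hu.ne']
    field_simp

lemma g_beta0 {β γ : ℝ} (hβ : 0 < β) (hγ : 0 < γ) {a : ℝ} (ha : 0 < a) :
    ∫ u in (0:ℝ)..a, g β (a - u) * g γ u = g (β + γ) a := by
  have h := Complex.betaIntegral_scaled (γ : ℂ) (β : ℂ) ha
  rw [Complex.betaIntegral_eq_Gamma_mul_div _ _ (by simpa) (by simpa)] at h
  have e : ∫ x in (0:ℝ)..a, (x : ℂ) ^ ((γ:ℂ) - 1) * ((a : ℂ) - x) ^ ((β:ℂ) - 1)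
      = ∫ x in (0:ℝ)..a, (((x ^ (γ - 1) * (a - x) ^ (β - 1) : ℝ)) : ℂ) := by
    apply intervalIntegral.integral_congr
    intro x hx
    rw [uIcc_of_le ha.le] at hx
    simp only
    push_cast
    rw [Complex.ofReal_cpow hx.1, Complex.ofReal_cpow (sub_nonneg.2 hx.2)]
    push_cast
    rfl
  rw [e, intervalIntegral.integral_ofReal] at h
  have h2 : ∫ x in (0:ℝ)..a, (x ^ (γ - 1) * (a - x) ^ (β - 1) : ℝ)
      = a ^ (β + γ - 1) * (Real.Gamma γ * Real.Gamma β / Real.Gamma (β + γ)) := by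
    apply Complex.ofReal_injective
    rw [h]
    push_cast
    rw [Complex.ofReal_cpow ha.le, ← Complex.Gamma_ofReal, ← Complex.Gamma_ofReal,
      ← Complex.Gamma_ofReal]
    push_cast
    rw [add_comm (γ : ℂ)]
  have h3 : ∀ u, g β (a - u) * g γ u
      = (u ^ (γ - 1) * (a - u) ^ (β - 1)) * (Real.Gamma β * Real.Gamma γ)⁻¹ := by
    intro u; unfold g; field_simp
  have := (Real.Gamma_pos_of_pos hβ).ne'
  have := (Real.Gamma_pos_of_pos hγ).ne'
  simp_rw [h3]
  rw [intervalIntegral.integral_mul_const, h2]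
  unfold g
  field_simp

lemma g_beta {β γ : ℝ} (hβ : 0 < β) (hγ : 0 < γ) {r t : ℝ} (h : r < t) :
    ∫ s in Ioc r t, g β (t - s) * g γ (s - r) = g (β + γ) (t - r) := by
  rw [← intervalIntegral.integral_of_le h.le, ← g_beta0 hβ hγ (sub_pos.2 h)]
  have := intervalIntegral.integral_comp_sub_right
    (a := r) (b := t) (fun u => g β (t - r - u) * g γ u) r
  rw [sub_self] at this
  rw [← this]
  congr 1; ext s; congr 2; ring

lemma g_beta_int {β γ : ℝ} (hβ : 0 < β) (hγ : 0 < γ) {r t : ℝ} (h : r < t) :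
    IntegrableOn (fun s => g β (t - s) * g γ (s - r)) (Ioc r t) := by
  by_contra hn
  have h1 := g_beta hβ hγ h
  rw [integral_undef hn] at h1
  exact (g_pos (add_pos hβ hγ) (sub_pos.2 h)).ne h1

lemma g_one (u : ℝ) : g 1 u = 1 := by simp [g]

lemma g_int {β : ℝ} (hβ : 0 < β) (t : ℝ) :
    IntegrableOn (fun s => g β (t - s)) (Ioc 0 t) := by
  rcases le_or_gt t 0 with h | h
  · simp [Ioc_eq_empty_of_le h]
  · simpa [g_one] using g_beta_int hβ one_pos h

lemma g_integral {β : ℝ} (hβ : 0 < β) {t : ℝ} (ht : 0 ≤ t) :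
    ∫ s in (0:ℝ)..t, g β (t - s) = g (β + 1) t := by
  rcases ht.eq_or_lt with rfl | h
  · simp [g, Real.zero_rpow hβ.ne']
  · simpa [g_one, intervalIntegral.integral_of_le ht] using g_beta hβ one_pos h

section
variable {X : Type*} [NormedAddCommGroup X] [NormedSpace ℝ X]

lemma conv_int {β : ℝ} (hβ : 0 < β) {f : ℝ → X} {t : ℝ} (hf : ContinuousOn f (Ici 0)) :
    IntegrableOn (fun s => g β (t - s) • f s) (Ioc 0 t) := by
  obtain ⟨C, hC⟩ := (isCompact_Icc (a := (0:ℝ)) (b := t)).exists_bound_of_continuousOn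
    (hf.mono Icc_subset_Ici_self)
  refine Integrable.smul_bdd (C := C) (g_int hβ t) ?_ ?_
  · exact (hf.mono (fun s hs => hs.1.le)).aestronglyMeasurable measurableSet_Ioc
  · exact (ae_restrict_iff' measurableSet_Ioc).2 (.of_forall fun s hs => hC s ⟨hs.1.le, hs.2⟩)

lemma conv_assoc [CompleteSpace X] {β γ : ℝ} (hβ : 0 < β) (hγ : 0 < γ) {f : ℝ → X} {t : ℝ} (ht : 0 ≤ t)
    (hf : ContinuousOn f (Ici 0)) :
    IntegrableOn (fun s => g β (t - s) • ∫ r in (0:ℝ)..s, g γ (s - r) • f r) (Ioc 0 t) ∧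
    ∫ s in (0:ℝ)..t, g β (t - s) • ∫ r in (0:ℝ)..s, g γ (s - r) • f r
      = ∫ r in (0:ℝ)..t, g (β + γ) (t - r) • f r := by
  set μ := (volume : Measure ℝ).restrict (Ioc 0 t) with hμ
  let k : ℝ → ℝ := (Ioi 0).indicator (g γ)
  have hk : Measurable k := (g_meas γ).indicator measurableSet_Ioi
  let K : ℝ → ℝ → X := fun s r => (g β (t - s) * k (s - r)) • f r
  have hfm : AEStronglyMeasurable f μ :=
    (hf.mono (fun s hs => hs.1.le)).aestronglyMeasurable measurableSet_Ioc
  have hkr : ∀ r, (fun s => g β (t - s) * k (s - r))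
      = (Ioi r).indicator (fun s => g β (t - s) * g γ (s - r)) := by
    intro r; ext s
    by_cases h : r < s <;> simp [k, indicator, h]
  have hne : ∀ᵐ r ∂μ, r ∈ Ioo 0 t := by
    rw [hμ, ← restrict_Ioo_eq_restrict_Ioc]
    exact ae_restrict_mem measurableSet_Ioo
  have hset : ∀ r ∈ Ioo 0 t, Ioi r ∩ Ioc 0 t = Ioc r t := by
    intro r hr; ext s; simp only [mem_inter_iff, mem_Ioi, mem_Ioc]
    have := hr.1
    constructor
    · rintro ⟨a, b, c⟩; exact ⟨a, c⟩
    · rintro ⟨a, c⟩; exact ⟨a, by linarith, c⟩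
  have hint1 : ∀ r ∈ Ioo 0 t, Integrable (fun s => g β (t - s) * k (s - r)) μ := by
    intro r hr
    rw [hkr, integrable_indicator_iff measurableSet_Ioi, IntegrableOn, hμ,
      Measure.restrict_restrict measurableSet_Ioi, hset r hr]
    exact g_beta_int hβ hγ hr.2
  have hval1 : ∀ r ∈ Ioo 0 t, ∫ s, g β (t - s) * k (s - r) ∂μ = g (β + γ) (t - r) := by
    intro r hr
    rw [hkr, integral_indicator measurableSet_Ioi, hμ,
      Measure.restrict_restrict measurableSet_Ioi, hset r hr]
    exact g_beta hβ hγ hr.2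
  have hK : Integrable (Function.uncurry K) (μ.prod μ) := by
    rw [integrable_prod_iff']
    · constructor
      · filter_upwards [hne] with r hr
        exact (hint1 r hr).smul_const (f r)
      · have := (conv_int (t := t) (add_pos hβ hγ) hf).norm
        refine this.congr ?_
        filter_upwards [hne] with r hr
        rw [norm_smul, Real.norm_of_nonneg (g_nonneg (add_pos hβ hγ) (by linarith [hr.2])),
          ← hval1 r hr, ← integral_mul_const]
        apply integral_congr_ae
        filter_upwards [hne] with s hs
        simp only [Function.uncurry, K]
        rw [norm_smul, Real.norm_of_nonneg]
        apply mul_nonneg (g_nonneg hβ (by linarith [hs.2]))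
        apply indicator_nonneg
        intro u hu; exact g_nonneg hγ (le_of_lt hu)
    · apply AEStronglyMeasurable.smul
      · apply Measurable.aestronglyMeasurable
        have := g_meas β
        fun_prop
      · exact hfm.comp_snd
  have hin : ∀ s ∈ Ioc 0 t, ∫ r, K s r ∂μ = g β (t - s) • ∫ r in (0:ℝ)..s, g γ (s - r) • f r := by
    intro s hs
    simp only [K, mul_smul]
    rw [integral_smul]
    congr 1
    have e : (fun r => k (s - r) • f r) = (Iio s).indicator (fun r => g γ (s - r) • f r) := by
      ext r; by_cases h : r < s <;> simp [k, indicator, h]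
    rw [e, integral_indicator measurableSet_Iio, hμ, Measure.restrict_restrict measurableSet_Iio,
      intervalIntegral.integral_of_le hs.1.le, integral_Ioc_eq_integral_Ioo]
    congr 2
    ext r; simp only [mem_inter_iff, mem_Iio, mem_Ioc, mem_Ioo]
    have := hs.2
    constructor
    · rintro ⟨a, b, c⟩; exact ⟨b, a⟩
    · rintro ⟨a, c⟩; exact ⟨c, a, by linarith⟩
  have hin' : (fun s => ∫ r, K s r ∂μ) =ᵐ[μ]
      fun s => g β (t - s) • ∫ r in (0:ℝ)..s, g γ (s - r) • f r :=
    (ae_restrict_iff' measurableSet_Ioc).2 (.of_forall hin)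
  refine ⟨hK.integral_prod_left.congr hin', ?_⟩
  rw [intervalIntegral.integral_of_le ht, intervalIntegral.integral_of_le ht,
    ← integral_congr_ae hin', integral_integral_swap hK]
  apply integral_congr_ae
  filter_upwards [hne] with r hr
  simp only [K]
  rw [integral_smul_const, hval1 r hr]
end

lemma closed_mem {E : Type*} [NormedAddCommGroup E] [NormedSpace ℂ E] [CompleteSpace E]
    (G : Submodule ℂ E) (hG : IsClosed (G : Set E)) {μ : Measure ℝ} {f : ℝ → E}
    (hf : Integrable f μ) (hm : ∀ᵐ s ∂μ, f s ∈ G) : ∫ s, f s ∂μ ∈ G := by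
  have : IsClosed (G : Set E) := hG
  have h := G.mkQL.integral_comp_comm hf
  have h0 : ∫ s, G.mkQL (f s) ∂μ = 0 := by
    apply integral_eq_zero_of_ae
    filter_upwards [hm] with s hs
    exact (Submodule.Quotient.mk_eq_zero G).2 hs
  rw [h0] at h
  exact (Submodule.Quotient.mk_eq_zero G).1 h.symm

theorem stmt_3
    {X : Type*} [NormedAddCommGroup X] [NormedSpace ℂ X] [CompleteSpace X]
    (α : ℝ) (hα1 : 1 < α) (hα2 : α < 2)
    (A : X →ₗ.[ℂ] X) (hA_closed : IsClosed (A.graph : Set (X × X)))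
    (hA_dense : Dense (A.domain : Set X))
    (S : ℝ → X →L[ℂ] X)
    (hS_cont : ∀ x : X, ContinuousOn (fun t => S t x) (Ici (0:ℝ)))
    (hS_zero : S 0 = 1)
    (hS_dom : ∀ t : ℝ, 0 ≤ t → ∀ x ∈ A.domain, S t x ∈ A.domain)
    (hS_comm : ∀ t : ℝ, 0 ≤ t → ∀ x y : X, (x, y) ∈ A.graph → (S t x, S t y) ∈ A.graph)
    (hS_eq : ∀ t : ℝ, 0 ≤ t → ∀ x y : X, (x, y) ∈ A.graph →
      S t x = x + ∫ s in (0:ℝ)..t, g α (t - s) • S s y)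
    :
    ∀ (x : X) (t : ℝ), 0 ≤ t →
      ((∫ s in (0:ℝ)..t, g α (t - s) • (s • Pa α S s x)),
        (-α) • (∫ s in (0:ℝ)..t, g α (t - s) • S s x) + t • Pa α S t x) ∈ A.graph := by
  have hP : ∀ (β : ℝ), 0 < β → ∀ x t, 0 ≤ t →
      IntegrableOn (fun s => g β (t - s) • Pa α S s x) (Ioc 0 t) ∧
      ∫ s in (0:ℝ)..t, g β (t - s) • Pa α S s x
        = ∫ s in (0:ℝ)..t, g (β + (α - 1)) (t - s) • S s x := fun β hβ x t ht =>
    conv_assoc hβ (sub_pos.2 hα1) ht (hS_cont x)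
  have hα0 : 0 < α := by linarith
  -- rewriting of the left side
  have hL : ∀ x t, 0 ≤ t → ∫ s in (0:ℝ)..t, g α (t - s) • (s • Pa α S s x)
      = t • (∫ s in (0:ℝ)..t, g (α + (α - 1)) (t - s) • S s x)
        - α • ∫ s in (0:ℝ)..t, g (α + 1 + (α - 1)) (t - s) • S s x := by
    intro x t ht
    obtain ⟨i1, e1⟩ := hP α hα0 x t ht
    obtain ⟨i2, e2⟩ := hP (α + 1) (by linarith) x t ht
    rw [← e1, ← e2, ← intervalIntegral.integral_smul, ← intervalIntegral.integral_smul,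
      ← intervalIntegral.integral_sub]
    · apply intervalIntegral.integral_congr
      intro s hs
      rw [uIcc_of_le ht] at hs
      have := g_succ hα0 (sub_nonneg.2 hs.2)
      simp only [smul_smul]
      rw [← this, ← sub_smul]
      congr 1; ring
    · exact ((intervalIntegrable_iff_integrableOn_Ioc_of_le ht).2 i1).smul t
    · exact ((intervalIntegrable_iff_integrableOn_Ioc_of_le ht).2 i2).smul α
  -- convolution against `x + g_α * S y`
  have hSx : ∀ (β : ℝ), 0 < β → ∀ x y, (x, y) ∈ A.graph → ∀ t, 0 ≤ t →
      ∫ s in (0:ℝ)..t, g β (t - s) • S s x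
        = g (β + 1) t • x + ∫ s in (0:ℝ)..t, g (β + α) (t - s) • S s y := by
    intro β hβ x y hxy t ht
    obtain ⟨i1, e1⟩ := conv_assoc hβ hα0 ht (hS_cont y)
    rw [← e1, ← g_integral hβ ht, ← intervalIntegral.integral_smul_const,
      ← intervalIntegral.integral_add]
    · apply intervalIntegral.integral_congr
      intro s hs
      rw [uIcc_of_le ht] at hs
      simp only
      rw [hS_eq s hs.1 x y hxy, smul_add]
    · exact ((intervalIntegrable_iff_integrableOn_Ioc_of_le ht).2 ((g_int hβ t).smul_const x))
    · exact ((intervalIntegrable_iff_integrableOn_Ioc_of_le ht).2 i1)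
  have hG : ∀ (β : ℝ), 0 < β → ∀ x y, (x, y) ∈ A.graph → ∀ t, 0 ≤ t →
      (∫ s in (0:ℝ)..t, g β (t - s) • S s x, ∫ s in (0:ℝ)..t, g β (t - s) • S s y) ∈ A.graph := by
    intro β hβ x y hxy t ht
    have i1 := conv_int (t := t) hβ (hS_cont x)
    have i2 := conv_int (t := t) hβ (hS_cont y)
    rw [intervalIntegral.integral_of_le ht, intervalIntegral.integral_of_le ht,
      ← integral_pair i1 i2]
    refine closed_mem _ hA_closed (i1.prodMk i2) ?_
    refine (ae_restrict_iff' measurableSet_Ioc).2 (.of_forall fun s hs => ?_)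
    exact A.graph.smul_of_tower_mem (g β (t - s)) (hS_comm s hs.1.le x y hxy)
  have hC : ∀ (β : ℝ), 0 < β → ∀ t, 0 ≤ t →
      Continuous fun x => ∫ s in (0:ℝ)..t, g β (t - s) • S s x := by
    intro β hβ t ht
    obtain ⟨M, hM⟩ := banach_steinhaus (g := fun s : Icc (0:ℝ) t => S s) (by
      intro x
      obtain ⟨C, hC⟩ := (isCompact_Icc (a := (0:ℝ)) (b := t)).exists_bound_of_continuousOn
        ((hS_cont x).mono Icc_subset_Ici_self)
      exact ⟨C, fun i => hC i i.2⟩)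
    rw [continuous_iff_continuousAt]
    intro x
    refine intervalIntegral.continuousAt_of_dominated_interval
      (bound := fun s => g β (t - s) * (M * (‖x‖ + 1))) ?_ ?_ ?_ ?_
    · refine .of_forall fun z => ?_
      rw [uIoc_of_le ht]
      exact (conv_int hβ (hS_cont z)).aestronglyMeasurable
    · filter_upwards [Metric.ball_mem_nhds x one_pos] with z hz
      refine .of_forall fun s hs => ?_
      rw [uIoc_of_le ht] at hs
      have hg := g_nonneg hβ (sub_nonneg.2 hs.2)
      have h1 := hM ⟨s, hs.1.le, hs.2⟩
      have h2 : ‖z‖ ≤ ‖x‖ + 1 := by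
        rw [mem_ball_iff_norm] at hz
        have := norm_sub_norm_le z x
        linarith
      rw [norm_smul, Real.norm_of_nonneg hg]
      refine mul_le_mul_of_nonneg_left ?_ hg
      exact (S s).le_of_opNorm_le_of_le h1 h2
    · exact ((intervalIntegrable_iff_integrableOn_Ioc_of_le ht).2 ((g_int hβ t).mul_const _))
    · refine .of_forall fun s hs => ?_
      fun_prop
  intro x t ht
  rw [hL x t ht]
  simp only [Pa]
  have hcl : IsClosed {x : X |
      (t • (∫ s in (0:ℝ)..t, g (α + (α - 1)) (t - s) • S s x)
        - α • (∫ s in (0:ℝ)..t, g (α + 1 + (α - 1)) (t - s) • S s x),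
      (-α) • (∫ s in (0:ℝ)..t, g α (t - s) • S s x)
        + t • (∫ s in (0:ℝ)..t, g (α - 1) (t - s) • S s x)) ∈ (A.graph : Set (X × X))} := by
    refine hA_closed.preimage ?_
    have c1 := hC (α + (α - 1)) (by linarith) t ht
    have c2 := hC (α + 1 + (α - 1)) (by linarith) t ht
    have c3 := hC α (by linarith) t ht
    have c4 := hC (α - 1) (by linarith) t ht
    exact ((c1.const_smul t).sub (c2.const_smul α)).prodMk
      ((c3.const_smul (-α)).add (c4.const_smul t))
  refine hcl.closure_subset_iff.2 ?_ (hA_dense x)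
  intro x hx
  obtain ⟨y, hxy⟩ : ∃ y, (x, y) ∈ A.graph := LinearPMap.mem_domain_iff.1 hx
  have m1 := A.graph.smul_of_tower_mem t (hG (α + (α - 1)) (by linarith) x y hxy t ht)
  have m2 := A.graph.smul_of_tower_mem α (hG (α + 1 + (α - 1)) (by linarith) x y hxy t ht)
  have m := A.graph.sub_mem m1 m2
  simp only [mem_setOf_eq, SetLike.mem_coe]
  convert m using 1
  refine Prod.ext rfl ?_
  simp only [Prod.snd_sub, Prod.smul_snd]
  rw [hSx α hα0 x y hxy t ht, hSx (α - 1) (by linarith) x y hxy t ht, smul_add, smul_add,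
    smul_smul, smul_smul, show α - 1 + 1 = α by ring, show α + 1 + (α - 1) = α + α by ring,
    show α - 1 + α = α + (α - 1) by ring, g_succ hα0 ht, neg_mul, neg_smul, neg_smul]
  abel
end

section
/- Let A generate an α-times resolvent family {S_α(t)}_{t≥0} on X, where 1 < α < 2, let r > 0, and suppose S_α(·) is of bounded semivariation on [0,r]. If f : [0,r] → X is continuous, then for every t ∈ [0,r] the element (P_α*f)(t) = ∫_0^t P_α(t−s)f(s) ds belongs to D(A), and A((P_α*f)(t)) is the limit of the Riemann–Stieltjes sums −Σ_{i=1}^n (S_α(t−s_i) − S_α(t−s_{i−1})) f(ξ_i): for every ε > 0 there exists δ > 0 such that for every partition 0 = s_0 < s_1 < ⋯ < s_n = t with max_i (s_i − s_{i−1}) < δ and every choice of tags ξ_i ∈ [s_{i−1}, s_i], one has ‖A((P_α*f)(t)) + Σ_{i=1}^n (S_α(t−s_i) − S_α(t−s_{i−1})) f(ξ_i)‖ < ε. -/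
open MeasureTheory Set

/-- `G` is of bounded semivariation on `[0, r]`: the quantities
`‖∑ (G(d_{i+1}) - G(d_i)) x_i‖` over all partitions `0 = d_0 < ⋯ < d_n = r`
and all vectors of norm at most one are uniformly bounded. -/
def BoundedSemivariation {X : Type*} [NormedAddCommGroup X] [NormedSpace ℂ X]
    (G : ℝ → X →L[ℂ] X) (r : ℝ) : Prop :=
  ∃ C : ℝ, ∀ (n : ℕ) (d : ℕ → ℝ) (x : ℕ → X),
    d 0 = 0 → d n = r → (∀ i < n, d i < d (i + 1)) → (∀ i, ‖x i‖ ≤ 1) →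
    ‖∑ i ∈ Finset.range n, (G (d (i + 1)) - G (d i)) (x i)‖ ≤ C

open Filter Topology

theorem aux_k_ii {α : ℝ} (hα1 : 1 < α) (a b : ℝ) :
    IntervalIntegrable (fun s => g (α - 1) s) volume a b := by
  unfold g
  exact (intervalIntegral.intervalIntegrable_rpow' (by linarith)).div_const _

theorem aux_k_ii_sub {α : ℝ} (hα1 : 1 < α) (v : ℝ) (a b : ℝ) :
    IntervalIntegrable (fun s => g (α - 1) (v - s)) volume a b := by
  have := (aux_k_ii hα1 (v - a) (v - b)).comp_sub_left v
  simpa using this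

theorem aux_k_nonneg {α : ℝ} (hα1 : 1 < α) {s : ℝ} (hs : 0 ≤ s) : 0 ≤ g (α - 1) s := by
  unfold g
  exact div_nonneg (Real.rpow_nonneg hs _) (Real.Gamma_pos_of_pos (by linarith)).le

theorem aux_k_int {α : ℝ} (hα1 : 1 < α) (w : ℝ) :
    ∫ s in (0:ℝ)..w, g (α - 1) s = g α w := by
  unfold g
  rw [intervalIntegral.integral_div, integral_rpow (Or.inl (by linarith))]
  have h1 : α - 1 - 1 + 1 = α - 1 := by ring
  have h2 : Real.Gamma α = (α - 1) * Real.Gamma (α - 1) := by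
    rw [← Real.Gamma_add_one (by linarith)]; congr 1; ring
  rw [h1, Real.zero_rpow (by linarith), h2, sub_zero, div_div]

theorem aux_k_int_sub {α : ℝ} (hα1 : 1 < α) (w : ℝ) :
    ∫ s in (0:ℝ)..w, g (α - 1) (w - s) = g α w := by
  rw [intervalIntegral.integral_comp_sub_left (fun s => g (α - 1) s)]
  simpa using aux_k_int hα1 w

theorem aux_galpha_cont {α : ℝ} (hα1 : 1 < α) : Continuous (g α) := by
  unfold g
  exact (Real.continuous_rpow_const (by linarith)).div_const _

theorem aux_galpha_mono {α : ℝ} (hα1 : 1 < α) {v u : ℝ} (hv : 0 ≤ v) (hvu : v ≤ u) :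
    g α v ≤ g α u := by
  unfold g
  have := Real.Gamma_pos_of_pos (show 0 < α by linarith)
  have := Real.rpow_le_rpow hv hvu (show 0 ≤ α - 1 by linarith)
  gcongr

theorem aux_galpha_nonneg {α : ℝ} (hα1 : 1 < α) {v : ℝ} (hv : 0 ≤ v) :
    0 ≤ g α v := by
  unfold g
  exact div_nonneg (Real.rpow_nonneg hv _) (Real.Gamma_pos_of_pos (by linarith)).le

section conv
set_option linter.unusedSectionVars false
variable {E : Type*} [NormedAddCommGroup E] [NormedSpace ℝ E] [CompleteSpace E]

theorem aux_bound {α : ℝ} (hα1 : 1 < α) (φ : ℝ → E) {M v : ℝ} (hv : 0 ≤ v)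
    (hM : ∀ s ∈ Icc 0 v, ‖φ s‖ ≤ M) :
    ‖∫ s in (0:ℝ)..v, g (α - 1) (v - s) • φ s‖ ≤ g α v * M := by
  rw [← aux_k_int_sub hα1, ← intervalIntegral.integral_mul_const]
  apply intervalIntegral.norm_integral_le_of_norm_le hv _ ((aux_k_ii_sub hα1 v 0 v).mul_const M)
  filter_upwards with s hs
  have := aux_k_nonneg hα1 (show 0 ≤ v - s by linarith [hs.2])
  rw [norm_smul, Real.norm_of_nonneg this]
  exact mul_le_mul_of_nonneg_left (hM s ⟨hs.1.le, hs.2⟩) this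

theorem aux_ii {α : ℝ} (hα1 : 1 < α) (φ : ℝ → E) (hφ : Continuous φ) (v a b : ℝ) :
    IntervalIntegrable (fun s => g (α - 1) (v - s) • φ s) volume a b :=
  (aux_k_ii_sub hα1 v a b).smul_continuousOn hφ.continuousOn

theorem aux_rep {α : ℝ} (φ : ℝ → E) {u v : ℝ} (hv : v ∈ Icc 0 u) :
    ∫ s in (0:ℝ)..v, g (α - 1) (v - s) • φ s =
      ∫ s in (0:ℝ)..u, g (α - 1) s • (if s ≤ v then φ (v - s) else 0) := by
  have h1 : ∫ s in (0:ℝ)..v, g (α - 1) (v - s) • φ s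
      = ∫ s in (0:ℝ)..v, g (α - 1) s • φ (v - s) := by
    have := intervalIntegral.integral_comp_sub_left (a := 0) (b := v)
      (fun s => g (α - 1) s • φ (v - s)) v
    simpa using this
  rw [h1, ← intervalIntegral.integral_indicator hv]
  congr 1
  ext s
  by_cases h : s ≤ v <;> simp [indicator, h]

theorem aux_cont {α : ℝ} (hα1 : 1 < α) (φ : ℝ → E) (hφ : Continuous φ) {M u : ℝ}
    (hM : ∀ s, ‖φ s‖ ≤ M) :
    ContinuousOn (fun v => ∫ s in (0:ℝ)..v, g (α - 1) (v - s) • φ s) (Icc 0 u) := by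
  refine ContinuousOn.congr ?_ (fun v hv => aux_rep φ hv)
  intro v hv
  have hM0 : 0 ≤ M := (norm_nonneg _).trans (hM 0)
  apply intervalIntegral.continuousWithinAt_of_dominated_interval
    (bound := fun s => ‖g (α - 1) s‖ * M)
  · refine Eventually.of_forall fun w => ?_
    refine ((aux_k_ii hα1 0 u).def'.aestronglyMeasurable).smul ?_
    apply StronglyMeasurable.aestronglyMeasurable
    apply StronglyMeasurable.ite measurableSet_Iic
    · exact (hφ.comp (by fun_prop : Continuous fun s => w - s)).stronglyMeasurable
    · exact stronglyMeasurable_const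
  · refine Eventually.of_forall fun w => Eventually.of_forall fun s _ => ?_
    rw [norm_smul]
    gcongr
    split_ifs
    · exact hM _
    · simpa using hM0
  · exact (aux_k_ii hα1 0 u).norm.mul_const M
  · have : ∀ᵐ s : ℝ, s ≠ v := by simp [ae_iff]
    filter_upwards [this] with s hs _
    apply ContinuousAt.continuousWithinAt
    apply ContinuousAt.const_smul
    rcases lt_or_gt_of_ne hs with h | h
    · have : (fun w => φ (w - s)) =ᶠ[𝓝 v] (fun w => if s ≤ w then φ (w - s) else 0) := by
        filter_upwards [lt_mem_nhds h] with w hw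
        rw [if_pos hw.le]
      refine ContinuousAt.congr ?_ this
      exact (hφ.comp (by fun_prop : Continuous fun w => w - s)).continuousAt
    · have : (fun w => (0:E)) =ᶠ[𝓝 v] (fun w => if s ≤ w then φ (w - s) else 0) := by
        filter_upwards [gt_mem_nhds h] with w hw
        rw [if_neg (not_le.2 hw)]
      exact ContinuousAt.congr continuousAt_const this

theorem aux_fubini {α : ℝ} (hα1 : 1 < α) (φ : ℝ → E) (hφ : Continuous φ) {u : ℝ} (hu : 0 ≤ u) :
    ∫ v in (0:ℝ)..u, ∫ s in (0:ℝ)..v, g (α - 1) (v - s) • φ s =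
      ∫ s in (0:ℝ)..u, g α (u - s) • φ s := by
  set kk : ℝ → ℝ := (Ioc 0 u).indicator (g (α - 1)) with hkk
  set ff : ℝ → E := (Ioc 0 u).indicator φ with hff
  have hki : Integrable kk volume := by
    rw [hkk, integrable_indicator_iff measurableSet_Ioc]
    exact (intervalIntegrable_iff_integrableOn_Ioc_of_le hu).1 (aux_k_ii hα1 0 u)
  have hfi : Integrable ff volume := by
    rw [hff, integrable_indicator_iff measurableSet_Ioc]
    exact (intervalIntegrable_iff_integrableOn_Ioc_of_le hu).1 (hφ.intervalIntegrable 0 u)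
  have hint : Integrable (Function.uncurry fun v s : ℝ => kk (v - s) • ff s)
      ((volume.restrict (Ioc 0 u)).prod volume) := by
    have := Integrable.convolution_integrand (μ := volume) (ν := volume)
      (ContinuousLinearMap.lsmul ℝ ℝ : ℝ →L[ℝ] E →L[ℝ] E).flip hfi hki
    have h2 := this.mono_measure (show (volume.restrict (Ioc 0 u)).prod volume ≤ 
      (volume : Measure ℝ).prod (volume : Measure ℝ) from 
        Measure.prod_mono Measure.restrict_le_self le_rfl)
    exact h2
  have h1 : ∫ v in (0:ℝ)..u, ∫ s in (0:ℝ)..v, g (α - 1) (v - s) • φ s =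
      ∫ v in Ioc 0 u, ∫ s, kk (v - s) • ff s := by
    rw [intervalIntegral.integral_of_le hu]
    refine setIntegral_congr_fun measurableSet_Ioc fun v hv => ?_
    rw [intervalIntegral.integral_of_le hv.1.le, integral_Ioc_eq_integral_Ioo,
      ← integral_indicator measurableSet_Ioo]
    congr 1
    ext s
    simp only [hkk, hff, indicator]
    by_cases h : s ∈ Ioo 0 v
    · rw [if_pos h, if_pos ⟨by linarith [h.2], by linarith [h.1, hv.2]⟩,
        if_pos ⟨h.1, by linarith [h.2, hv.2]⟩]
    · rw [if_neg h]
      by_cases h0 : 0 < s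
      · have : ¬ s < v := fun h' => h ⟨h0, h'⟩
        rw [if_neg (fun h' => this (by linarith [h'.1])), zero_smul]
      · rw [if_neg (fun h' => h0 h'.1) (c := s ∈ Ioc 0 u), smul_zero]
  rw [h1, integral_integral_swap hint, intervalIntegral.integral_of_le hu,
    ← integral_indicator measurableSet_Ioc]
  congr 1
  ext s
  rw [integral_smul_const]
  simp only [hff, indicator]
  by_cases h : s ∈ Ioc 0 u
  · rw [if_pos h, if_pos h]
    congr 1
    rw [← intervalIntegral.integral_of_le hu, intervalIntegral.integral_comp_sub_right, zero_sub,
      ← aux_k_int hα1]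
    have e1 : IntervalIntegrable kk volume (-s) 0 := hki.intervalIntegrable
    have e2 : IntervalIntegrable kk volume 0 (u - s) := hki.intervalIntegrable
    rw [← intervalIntegral.integral_add_adjacent_intervals e1 e2]
    have e3 : ∫ x in (-s)..0, kk x = 0 := by
      rw [intervalIntegral.integral_congr (g := fun _ => 0)]
      · simp
      · intro x hx
        rw [uIcc_of_le (by linarith [h.1])] at hx
        simp only [hkk, indicator]
        rw [if_neg (fun h' => by linarith [h'.1, hx.2])]
    rw [e3, zero_add]
    apply intervalIntegral.integral_congr_ae
    filter_upwards with x hx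
    rw [uIoc_of_le (by linarith [h.2])] at hx
    simp only [hkk, indicator]
    rw [if_pos ⟨hx.1, by linarith [hx.2, h.1]⟩]
  · rw [if_neg h, if_neg h, smul_zero]
end conv

def AuxGood (t δ : ℝ) (p : ℕ × (ℕ → ℝ) × (ℕ → ℝ)) : Prop :=
  p.2.1 0 = 0 ∧ p.2.1 p.1 = t ∧ (∀ i < p.1, p.2.1 i < p.2.1 (i + 1)) ∧
    (∀ i < p.1, p.2.1 (i + 1) - p.2.1 i < δ) ∧
    (∀ i < p.1, p.2.2 i ∈ Icc (p.2.1 i) (p.2.1 (i + 1)))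

def auxFil (t : ℝ) : Filter (ℕ × (ℕ → ℝ) × (ℕ → ℝ)) :=
  ⨅ δ ∈ Ioi (0:ℝ), 𝓟 {p | AuxGood t δ p}

theorem auxFil_basis (t : ℝ) :
    (auxFil t).HasBasis (fun δ : ℝ => 0 < δ) (fun δ => {p | AuxGood t δ p}) := by
  apply hasBasis_biInf_principal
  · intro a ha b hb
    refine ⟨min a b, mem_Ioi.2 (lt_min ha hb), ?_, ?_⟩
    · rintro p ⟨h1, h2, h3, h4, h5⟩
      exact ⟨h1, h2, h3, fun i hi => (h4 i hi).trans_le (min_le_left _ _), h5⟩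
    · rintro p ⟨h1, h2, h3, h4, h5⟩
      exact ⟨h1, h2, h3, fun i hi => (h4 i hi).trans_le (min_le_right _ _), h5⟩
  · exact ⟨1, mem_Ioi.2 one_pos⟩

theorem auxFil_neBot {t : ℝ} (ht : 0 < t) : (auxFil t).NeBot := by
  rw [(auxFil_basis t).neBot_iff]
  intro δ hδ
  obtain ⟨N, hN⟩ := exists_nat_gt (t / δ)
  have hN0 : (0:ℝ) < N := lt_trans (by positivity) hN
  have hd : t / N < δ := by
    rw [div_lt_iff₀ hN0]; rw [div_lt_iff₀ hδ] at hN; linarith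
  have hp : 0 < t / N := by positivity
  refine ⟨(N, fun i => i * (t / N), fun i => i * (t / N)), ?_, ?_, ?_, ?_, ?_⟩
  · simp
  · simp only; field_simp
  · intro i _; simp only; push_cast; linarith
  · intro i _; simp only; push_cast; linarith
  · intro i _; simp only; push_cast; constructor <;> linarith

theorem aux_le {n : ℕ} {s : ℕ → ℝ} (h : ∀ i < n, s i < s (i + 1)) {i j : ℕ} (hij : i ≤ j)
    (hj : j ≤ n) : s i ≤ s j := by
  induction j, hij using Nat.le_induction with
  | base => exact le_rfl
  | succ k hk ih => exact (ih (by omega)).trans (h k (by omega)).le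

section RS
set_option linter.unusedSectionVars false
variable {X : Type*} [NormedAddCommGroup X] [NormedSpace ℂ X]

noncomputable def auxRS (t : ℝ) (S : ℝ → X →L[ℂ] X) (f : ℝ → X)
    (p : ℕ × (ℕ → ℝ) × (ℕ → ℝ)) : X :=
  ∑ i ∈ Finset.range p.1, (S (t - p.2.1 (i + 1)) - S (t - p.2.1 i)) (f (p.2.2 i))

theorem aux_semivar {S : ℝ → X →L[ℂ] X} {r : ℝ} (hsv : BoundedSemivariation S r) :
    ∃ C : ℝ, 0 ≤ C ∧ ∀ t ∈ Icc 0 r, ∀ (n : ℕ) (s : ℕ → ℝ) (v : ℕ → X) (η : ℝ), 0 < η →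
      s 0 = 0 → s n = t → (∀ i < n, s i < s (i + 1)) → (∀ i < n, ‖v i‖ ≤ η) →
      ‖∑ i ∈ Finset.range n, (S (t - s (i + 1)) - S (t - s i)) (v i)‖ ≤ C * η := by
  obtain ⟨C, hC⟩ := hsv
  refine ⟨|C|, abs_nonneg _, ?_⟩
  intro t ht n s v η hη h0 hn hs hv
  let d : ℕ → ℝ := fun j => if j ≤ n then t - s (n - j) else r
  let x : ℕ → X := fun j => if j < n then -(((η⁻¹ : ℝ) : ℂ) • v (n - 1 - j)) else 0
  have hd : ∀ i < n, d i < d (i + 1) := by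
    intro i hi
    simp only [d]
    rw [if_pos (by omega), if_pos (by omega)]
    have := hs (n - (i + 1)) (by omega)
    rw [show n - (i + 1) + 1 = n - i by omega] at this
    linarith
  have hx : ∀ i, ‖x i‖ ≤ 1 := by
    intro i
    simp only [x]
    split_ifs with h
    · rw [norm_neg, norm_smul, Complex.norm_real, Real.norm_of_nonneg (by positivity)]
      rw [inv_mul_le_iff₀ hη, mul_one]
      exact hv _ (by omega)
    · simp
  have hsum : ∑ i ∈ Finset.range n, (S (d (i + 1)) - S (d i)) (x i) =
      ((η⁻¹ : ℝ) : ℂ) • ∑ i ∈ Finset.range n, (S (t - s (i + 1)) - S (t - s i)) (v i) := by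
    rw [← Finset.sum_range_reflect (fun i => (S (t - s (i + 1)) - S (t - s i)) (v i)),
      Finset.smul_sum]
    refine Finset.sum_congr rfl fun i hi => ?_
    have hi := Finset.mem_range.1 hi
    simp only [d, x]
    rw [if_pos (by omega), if_pos (by omega), if_pos hi,
      show n - (i + 1) = n - 1 - i by omega, show n - i = n - 1 - i + 1 by omega,
      map_neg, map_smul, ← smul_neg]
    congr 1
    simp
  have hd0 : d 0 = 0 := by simp [d, hn]
  have key : ‖∑ i ∈ Finset.range n, (S (d (i + 1)) - S (d i)) (x i)‖ ≤ C := by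
    rcases ht.2.lt_or_eq with h | h
    · have := hC (n + 1) d x hd0 (by simp [d]) ?_ hx
      · rw [Finset.sum_range_succ] at this
        have e : x n = 0 := by simp [x]
        rwa [e, map_zero, add_zero] at this
      · intro i hi
        rcases Nat.lt_succ_iff_lt_or_eq.1 hi with h' | h'
        · exact hd i h'
        · subst h'; simp [d, h0, h]
    · exact hC n d x hd0 (by simp [d, h0, h]) hd hx
  rw [hsum, norm_smul, Complex.norm_real, Real.norm_of_nonneg (by positivity),
    inv_mul_le_iff₀ hη] at key
  calc _ ≤ η * C := key
    _ ≤ |C| * η := by rw [mul_comm]; gcongr; exact le_abs_self C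

theorem aux_tele (S : ℝ → X →L[ℂ] X) (t : ℝ) (s : ℕ → ℝ) (x : X) {j n : ℕ} (hjn : j ≤ n) :
    ∑ i ∈ Finset.range n, (S (t - s (i + 1)) - S (t - s i)) (if j ≤ i then x else 0) =
      S (t - s n) x - S (t - s j) x := by
  induction n, hjn using Nat.le_induction with
  | base =>
    rw [sub_self]
    refine Finset.sum_eq_zero fun i hi => ?_
    rw [if_neg (by have := Finset.mem_range.1 hi; omega), map_zero]
  | succ k hk ih =>
    rw [Finset.sum_range_succ, ih, if_pos hk]
    simp

theorem aux_index {t δ a : ℝ} (hδ : 0 < δ) (ha : a ∈ Icc 0 t) {p : ℕ × (ℕ → ℝ) × (ℕ → ℝ)}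
    (hp : AuxGood t δ p) :
    ∃ j ≤ p.1, (∀ i < p.1, (a ≤ p.2.2 i ↔ j ≤ i)) ∧ |p.2.1 j - a| < δ := by
  obtain ⟨n, s, ξ⟩ := p
  obtain ⟨h0, hn, hs, hm, hξ⟩ := hp
  simp only at *
  have hex : ∃ j, n ≤ j ∨ a ≤ ξ j := ⟨n, Or.inl le_rfl⟩
  classical
  refine ⟨Nat.find hex, Nat.find_min' hex (Or.inl le_rfl), ?_, ?_⟩
  · intro i hi
    constructor
    · intro h; exact Nat.find_min' hex (Or.inr h)
    · intro h
      have hj : Nat.find hex < n := by omega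
      have h1 : a ≤ ξ (Nat.find hex) := by
        rcases Nat.find_spec hex with h' | h'
        · omega
        · exact h'
      rcases h.eq_or_lt with h' | h'
      · rwa [h'] at h1
      · have h2 := (hξ _ hj).2
        have h3 := (hξ i hi).1
        have h4 := aux_le hs (show Nat.find hex + 1 ≤ i by omega) hi.le
        linarith
  · have hjn : Nat.find hex ≤ n := Nat.find_min' hex (Or.inl le_rfl)
    have hup : s (Nat.find hex) < a + δ := by
      rcases Nat.eq_zero_or_pos (Nat.find hex) with h | h
      · rw [h, h0]; linarith [ha.1]
      · have h1 := Nat.find_min hex (show Nat.find hex - 1 < Nat.find hex by omega)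
        push Not at h1
        have h2 := (hξ _ h1.1).1
        have h3 := hm _ h1.1
        rw [show Nat.find hex - 1 + 1 = Nat.find hex by omega] at h3
        linarith [h1.2]
    have hlo : a - δ < s (Nat.find hex) := by
      rcases hjn.eq_or_lt with h | h
      · rw [h, hn]; linarith [ha.2]
      · rcases Nat.find_spec hex with h' | h'
        · omega
        · have h2 := (hξ _ h).2
          have h3 := hm _ h
          linarith
    rw [abs_lt]; constructor <;> linarith

theorem aux_ind {S : ℝ → X →L[ℂ] X} 
    (hS_cont : ∀ x : X, ContinuousOn (fun t => S t x) (Ici (0:ℝ))) {t a : ℝ} (ha : a ∈ Icc 0 t)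
    (x : X) :
    Tendsto (auxRS t S (fun ξ => if a ≤ ξ then x else 0)) (auxFil t)
      (𝓝 (S 0 x - S (t - a) x)) := by
  rw [(auxFil_basis t).tendsto_iff Metric.nhds_basis_ball]
  intro ε hε
  have hc := hS_cont x (t - a) (by simpa using ha.2)
  rw [Metric.continuousWithinAt_iff] at hc
  obtain ⟨δ, hδ, hc⟩ := hc ε hε
  refine ⟨δ, hδ, fun p hp => ?_⟩
  obtain ⟨j, hj, hiff, hab⟩ := aux_index hδ ha hp
  obtain ⟨n, s, ξ⟩ := p
  obtain ⟨h0, hn, hs, hm, hξ⟩ := hp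
  simp only at *
  have : auxRS t S (fun ξ => if a ≤ ξ then x else 0) (n, s, ξ) = S 0 x - S (t - s j) x := by
    have := aux_tele S t s x hj
    rw [hn, sub_self] at this
    rw [← this]
    refine Finset.sum_congr rfl fun i hi => ?_
    simp only [hiff i (Finset.mem_range.1 hi)]
  rw [this, Metric.mem_ball, dist_sub_left]
  apply hc
  · have := aux_le hs hj le_rfl
    rw [hn] at this; simpa using this
  · rw [Real.dist_eq, show t - s j - (t - a) = -(s j - a) by ring, abs_neg]; exact hab

theorem aux_step {f : ℝ → X} {t : ℝ} (ht : 0 < t) (hf : ContinuousOn f (Icc 0 t)) {η : ℝ}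
    (hη : 0 < η) : ∃ (K : ℕ) (a : ℕ → ℝ) (d : ℕ → X), (∀ k < K, a k ∈ Icc 0 t) ∧
      ∀ ξ ∈ Icc 0 t, ‖f ξ - ∑ k ∈ Finset.range K, if a k ≤ ξ then d k else 0‖ ≤ η := by
  have hu := isCompact_Icc.uniformContinuousOn_of_continuous hf
  rw [Metric.uniformContinuousOn_iff] at hu
  obtain ⟨δ, hδ, hu⟩ := hu η hη
  obtain ⟨N, hN⟩ := exists_nat_gt (t / δ)
  have hN0 : (0:ℝ) < N := lt_trans (by positivity) hN
  have hd : t / N < δ := by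
    rw [div_lt_iff₀ hN0]; rw [div_lt_iff₀ hδ] at hN; linarith
  have hp : 0 < t / N := by positivity
  have hNt : N * (t / N) = t := by field_simp
  set h := t / N with hh
  refine ⟨N + 1, fun k => k * h, fun k => if k = 0 then f 0 else f (k * h) - f ((k - 1 : ℕ) * h), 
    ?_, ?_⟩
  · intro k hk
    refine ⟨by positivity, ?_⟩
    have : (k : ℝ) ≤ N := by exact_mod_cast Nat.lt_succ_iff.1 hk
    simp only
    nlinarith
  · intro ξ hξ
    set m := ⌊ξ / h⌋₊ with hm
    have hξh : 0 ≤ ξ / h := div_nonneg hξ.1 hp.le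
    have hiff : ∀ k : ℕ, (k * h ≤ ξ ↔ k < m + 1) := by
      intro k
      rw [Nat.lt_succ_iff, hm, Nat.le_floor_iff hξh, le_div_iff₀ hp]
    have hmN : m ≤ N := by
      have h1 := (hiff m).2 (by omega)
      have h2 : m * h ≤ N * h := by linarith [hξ.2]
      exact_mod_cast le_of_mul_le_mul_right h2 hp
    have hsum : ∑ k ∈ Finset.range (N + 1), (if (k:ℝ) * h ≤ ξ then 
        (if k = 0 then f 0 else f (k * h) - f ((k - 1 : ℕ) * h)) else 0) = f (m * h) := by
      simp only [hiff]
      rw [← Finset.sum_filter]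
      have : (Finset.range (N + 1)).filter (fun k => k < m + 1) = Finset.range (m + 1) := by
        ext k; simp; omega
      rw [this, Finset.sum_range_succ']
      have e := Finset.sum_range_sub (fun k : ℕ => f (k * h)) m
      simp only [Nat.add_sub_cancel, Nat.add_eq_zero_iff, one_ne_zero, and_false, if_false, if_true]
      rw [e]
      simp
    rw [hsum, ← dist_eq_norm]
    have h1 := (hiff m).2 (by omega)
    have h2 : ξ < (m + 1) * h := by
      by_contra hcon
      push Not at hcon
      have := (hiff (m + 1)).1 (by push_cast; exact hcon)
      omega
    refine (hu ξ hξ _ ⟨by positivity, by linarith [hξ.2]⟩ ?_).le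
    rw [Real.dist_eq, abs_lt]; constructor <;> linarith

theorem aux_RS_bound {S : ℝ → X →L[ℂ] X} {C t η : ℝ} 
    (hC : ∀ (n : ℕ) (s : ℕ → ℝ) (v : ℕ → X) (η : ℝ), 0 < η →
      s 0 = 0 → s n = t → (∀ i < n, s i < s (i + 1)) → (∀ i < n, ‖v i‖ ≤ η) →
      ‖∑ i ∈ Finset.range n, (S (t - s (i + 1)) - S (t - s i)) (v i)‖ ≤ C * η) 
    (hη : 0 < η) (f φ : ℝ → X) (hfφ : ∀ ξ ∈ Icc 0 t, ‖f ξ - φ ξ‖ ≤ η) {δ : ℝ}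
    {p : ℕ × (ℕ → ℝ) × (ℕ → ℝ)} (hp : AuxGood t δ p) :
    ‖auxRS t S f p - auxRS t S φ p‖ ≤ C * η := by
  obtain ⟨n, s, ξ⟩ := p
  obtain ⟨h0, hn, hs, hm, hξ⟩ := hp
  simp only at *
  have := hC n s (fun i => f (ξ i) - φ (ξ i)) η hη h0 hn hs ?_
  · simpa only [auxRS, ← Finset.sum_sub_distrib, ← map_sub] using this
  · intro i hi
    apply hfφ
    have h1 := aux_le hs (Nat.zero_le i) hi.le
    have h2 := aux_le hs (show i + 1 ≤ n from hi) le_rfl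
    have := hξ i hi
    exact ⟨by linarith [this.1], by linarith [this.2]⟩

theorem aux_RS_tendsto [CompleteSpace X] {S : ℝ → X →L[ℂ] X} 
    (hS_cont : ∀ x : X, ContinuousOn (fun t => S t x) (Ici (0:ℝ))) {r t : ℝ}
    (hsv : BoundedSemivariation S r) (ht : 0 < t) (htr : t ≤ r) {f : ℝ → X}
    (hf : ContinuousOn f (Icc 0 t)) : 
    ∃ w, Tendsto (auxRS t S f) (auxFil t) (𝓝 w) := by
  have := auxFil_neBot ht
  obtain ⟨C, hC0, hC⟩ := aux_semivar hsv
  have hC := hC t ⟨ht.le, htr⟩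
  apply CompleteSpace.complete (f := map (auxRS t S f) (auxFil t))
  rw [Metric.cauchy_iff]
  refine ⟨inferInstance, fun ε hε => ?_⟩
  have hη : 0 < ε / (4 * (C + 1)) := by positivity
  have hCη : C * (ε / (4 * (C + 1))) < ε / 4 := by
    rw [mul_div_assoc', div_lt_div_iff₀ (by positivity) (by positivity)]
    nlinarith
  obtain ⟨K, a, d, ha, hφ⟩ := aux_step ht hf hη
  have hlim : Tendsto (auxRS t S (fun ξ => ∑ k ∈ Finset.range K, if a k ≤ ξ then d k else 0)) 
      (auxFil t) (𝓝 (∑ k ∈ Finset.range K, (S 0 (d k) - S (t - a k) (d k)))) := by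
    have := tendsto_finsetSum (Finset.range K) (fun k hk => 
      aux_ind hS_cont (ha k (Finset.mem_range.1 hk)) (d k))
    refine this.congr fun p => ?_
    simp only [auxRS, map_sum]
    rw [Finset.sum_comm]
  set w := ∑ k ∈ Finset.range K, (S 0 (d k) - S (t - a k) (d k))
  have hev : ∀ᶠ p in auxFil t, dist (auxRS t S f p) w < ε / 2 := by
    have h1 := Metric.tendsto_nhds.1 hlim (ε / 4) (by positivity)
    have h2 : ∀ᶠ p in auxFil t, AuxGood t 1 p := (auxFil_basis t).mem_of_mem one_pos
    filter_upwards [h1, h2] with p h1 h2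
    have h3 := aux_RS_bound hC hη f _ hφ h2
    rw [← dist_eq_norm] at h3
    refine (dist_triangle _ _ _).trans_lt ((add_lt_add_of_le_of_lt (h3.trans hCη.le) h1).trans_le ?_)
    linarith
  refine ⟨_, image_mem_map hev, ?_⟩
  rintro _ ⟨p, hp, rfl⟩ _ ⟨q, hq, rfl⟩
  have hp : dist (auxRS t S f p) w < ε / 2 := hp
  have hq : dist (auxRS t S f q) w < ε / 2 := hq
  have := dist_triangle_right (auxRS t S f p) (auxRS t S f q) w
  linarith
end RS

section main
variable {X : Type*} [NormedAddCommGroup X] [NormedSpace ℂ X] [CompleteSpace X]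

theorem aux_Pa {α : ℝ} (hα1 : 1 < α) {S : ℝ → X →L[ℂ] X} 
    (hS_cont : ∀ x : X, ContinuousOn (fun t => S t x) (Ici (0:ℝ))) {r : ℝ} (hr : 0 < r) :
    ∃ M : ℝ, 0 ≤ M ∧ (∀ v ∈ Icc 0 r, ∀ x, ‖Pa α S v x‖ ≤ M * ‖x‖) ∧
      (∀ x, ContinuousOn (fun v => Pa α S v x) (Icc 0 r)) ∧
      (∀ v ∈ Icc 0 r, ∀ x y, Pa α S v (x - y) = Pa α S v x - Pa α S v y) ∧
      (∀ u ∈ Icc 0 r, ∀ x, ∫ v in (0:ℝ)..u, Pa α S v x = 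
        ∫ s in (0:ℝ)..u, g α (u - s) • S s x) := by
  obtain ⟨M, hM⟩ : ∃ M, ∀ v : Icc (0:ℝ) r, ‖S v‖ ≤ M := by
    apply banach_steinhaus
    intro x
    obtain ⟨C, hC⟩ := isCompact_Icc.exists_bound_of_continuousOn 
      ((hS_cont x).mono (Icc_subset_Ici_self : Icc (0:ℝ) r ⊆ _))
    exact ⟨C, fun v => hC v v.2⟩
  have hM0 : 0 ≤ M := (norm_nonneg _).trans (hM ⟨0, left_mem_Icc.2 hr.le⟩)
  have hMx : ∀ v ∈ Icc (0:ℝ) r, ∀ x, ‖S v x‖ ≤ M * ‖x‖ := fun v hv x =>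
    (S v).le_of_opNorm_le (hM ⟨v, hv⟩) x
  let c : ℝ → ℝ := fun w => max 0 (min w r)
  have hc : ∀ w, c w ∈ Icc 0 r := fun w => ⟨le_max_left _ _, max_le hr.le (min_le_right _ _)⟩
  have hcc : ∀ w ∈ Icc 0 r, c w = w := by
    intro w hw; simp only [c]; rw [min_eq_left hw.2, max_eq_right hw.1]
  have hcont : ∀ x, Continuous (fun w => S (c w) x) := by
    intro x
    exact (hS_cont x).comp_continuous (by fun_prop) (fun w => (hc w).1)
  have hPa : ∀ v ∈ Icc 0 r, ∀ x, Pa α S v x = 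
      ∫ s in (0:ℝ)..v, g (α - 1) (v - s) • S (c s) x := by
    intro v hv x
    unfold Pa
    apply intervalIntegral.integral_congr
    intro s hs
    rw [uIcc_of_le hv.1] at hs
    simp only [hcc s ⟨hs.1, hs.2.trans hv.2⟩]
  refine ⟨g α r * M, mul_nonneg (aux_galpha_nonneg hα1 hr.le) hM0, ?_, ?_, ?_, ?_⟩
  · intro v hv x
    refine (aux_bound hα1 (fun s => S s x) hv.1 (M := M * ‖x‖) 
      (fun s hs => hMx s ⟨hs.1, hs.2.trans hv.2⟩ x)).trans ?_
    rw [mul_assoc]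
    exact mul_le_mul_of_nonneg_right (aux_galpha_mono hα1 hv.1 hv.2) (by positivity)
  · intro x
    refine ContinuousOn.congr ?_ (fun v hv => hPa v hv x)
    exact aux_cont hα1 _ (hcont x) (M := M * ‖x‖) (fun s => hMx _ (hc s) x)
  · intro v hv x y
    rw [hPa v hv, hPa v hv, hPa v hv, ← intervalIntegral.integral_sub 
      (aux_ii hα1 _ (hcont x) v 0 v) (aux_ii hα1 _ (hcont y) v 0 v)]
    simp only [map_sub, smul_sub]
  · intro u hu x
    have h1 : ∫ v in (0:ℝ)..u, Pa α S v x = ∫ v in (0:ℝ)..u, 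
        ∫ s in (0:ℝ)..v, g (α - 1) (v - s) • S (c s) x := by
      apply intervalIntegral.integral_congr
      intro v hv
      rw [uIcc_of_le hu.1] at hv
      exact hPa v ⟨hv.1, hv.2.trans hu.2⟩ x
    rw [h1, aux_fubini hα1 _ (hcont x) hu.1]
    apply intervalIntegral.integral_congr
    intro s hs
    rw [uIcc_of_le hu.1] at hs
    simp only [hcc s ⟨hs.1, hs.2.trans hu.2⟩]

theorem aux_int_mem (G : Submodule ℂ (X × X)) (hG : IsClosed (G : Set (X × X))) {a b : ℝ}
    (hab : a ≤ b)
    {p q : ℝ → X} (hp : ContinuousOn p (Icc a b)) (hq : ContinuousOn q (Icc a b))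
    (h : ∀ s ∈ Icc a b, (p s, q s) ∈ G) :
    ((∫ s in a..b, p s), (∫ s in a..b, q s)) ∈ G := by
  have : IsClosed (G : Set (X × X)) := hG
  have hi : IntervalIntegrable (fun s => (p s, q s)) volume a b := by
    apply ContinuousOn.intervalIntegrable
    rw [uIcc_of_le hab]
    exact hp.prodMk hq
  have h1 := ContinuousLinearMap.intervalIntegral_comp_comm (ContinuousLinearMap.fst ℂ X X) hi
  have h2 := ContinuousLinearMap.intervalIntegral_comp_comm (ContinuousLinearMap.snd ℂ X X) hi
  have h3 := ContinuousLinearMap.intervalIntegral_comp_comm (G.mkQL) hi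
  simp only [ContinuousLinearMap.coe_fst', ContinuousLinearMap.coe_snd'] at h1 h2
  rw [h1, h2]
  have h4 : ∫ s in a..b, G.mkQL (p s, q s) = 0 := by
    rw [intervalIntegral.integral_congr (g := fun _ => 0)]
    · simp
    · intro s hs
      rw [uIcc_of_le hab] at hs
      simpa using h s hs
  rw [h4] at h3
  simpa using h3.symm

theorem aux_graph {α : ℝ} (hα1 : 1 < α) 
    (A : X →ₗ.[ℂ] X) (hA_closed : IsClosed (A.graph : Set (X × X)))
    (hA_dense : Dense (A.domain : Set X))
    (S : ℝ → X →L[ℂ] X)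
    (hS_cont : ∀ x : X, ContinuousOn (fun t => S t x) (Ici (0:ℝ)))
    (hS_comm : ∀ t : ℝ, 0 ≤ t → ∀ x y : X, (x, y) ∈ A.graph → (S t x, S t y) ∈ A.graph)
    (hS_eq : ∀ t : ℝ, 0 ≤ t → ∀ x y : X, (x, y) ∈ A.graph →
      S t x = x + ∫ s in (0:ℝ)..t, g α (t - s) • S s y) {r M : ℝ} (hM0 : 0 ≤ M)
    (hM : ∀ v ∈ Icc 0 r, ∀ x, ‖Pa α S v x‖ ≤ M * ‖x‖) 
    (hc : ∀ x, ContinuousOn (fun v => Pa α S v x) (Icc 0 r))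
    (hsub : ∀ v ∈ Icc 0 r, ∀ x y, Pa α S v (x - y) = Pa α S v x - Pa α S v y) 
    (hint : ∀ u ∈ Icc 0 r, ∀ x, ∫ v in (0:ℝ)..u, Pa α S v x = 
        ∫ s in (0:ℝ)..u, g α (u - s) • S s x) :
    ∀ u ∈ Icc 0 r, ∀ x, ((∫ v in (0:ℝ)..u, Pa α S v x), S u x - x) ∈ A.graph := by
  intro u hu
  have hii : ∀ x, IntervalIntegrable (fun v => Pa α S v x) volume 0 u := by
    intro x
    apply ContinuousOn.intervalIntegrable
    rw [uIcc_of_le hu.1]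
    exact (hc x).mono (Icc_subset_Icc_right hu.2)
  have hJ : Continuous (fun x => ∫ v in (0:ℝ)..u, Pa α S v x) := by
    apply (LipschitzWith.of_dist_le' (K := M * u) _).continuous
    intro x y
    rw [dist_eq_norm, dist_eq_norm, ← intervalIntegral.integral_sub (hii x) (hii y)]
    have := intervalIntegral.norm_integral_le_of_norm_le_const (a := 0) (b := u) 
      (f := fun v => Pa α S v x - Pa α S v y) (C := M * ‖x - y‖) ?_
    · rw [sub_zero, abs_of_nonneg hu.1] at this
      linarith
    · intro v hv
      rw [uIoc_of_le hu.1] at hv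
      have hv' : v ∈ Icc 0 r := ⟨hv.1.le, hv.2.trans hu.2⟩
      rw [← hsub v hv']
      exact hM v hv' _
  have hcl : IsClosed {x | ((∫ v in (0:ℝ)..u, Pa α S v x), S u x - x) ∈ A.graph} :=
    hA_closed.preimage (hJ.prodMk (((S u).continuous).sub continuous_id))
  have hdom : (A.domain : Set X) ⊆ {x | ((∫ v in (0:ℝ)..u, Pa α S v x), S u x - x) ∈ A.graph} := by
    intro x hx
    have hg : (x, A ⟨x, hx⟩) ∈ A.graph := A.mem_graph ⟨x, hx⟩
    show _ ∈ A.graph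
    rw [hint u hu, hS_eq u hu.1 _ _ hg, add_sub_cancel_left]
    have hcg : ContinuousOn (fun s => g α (u - s)) (Icc 0 u) := 
      ((aux_galpha_cont hα1).comp (by fun_prop : Continuous fun s => u - s)).continuousOn
    apply aux_int_mem A.graph hA_closed hu.1
    · exact hcg.smul ((hS_cont x).mono Icc_subset_Ici_self)
    · exact hcg.smul ((hS_cont _).mono Icc_subset_Ici_self)
    · intro s hs
      have := A.graph.smul_mem ((g α (u - s) : ℝ) : ℂ) (hS_comm s hs.1 _ _ hg)
      simpa using this
  exact fun x => (hcl.closure_subset_iff.2 hdom) (hA_dense x)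

theorem aux_conv_cont {α : ℝ} {S : ℝ → X →L[ℂ] X} {r M : ℝ} 
    (hM : ∀ v ∈ Icc 0 r, ∀ x, ‖Pa α S v x‖ ≤ M * ‖x‖) 
    (hc : ∀ x, ContinuousOn (fun v => Pa α S v x) (Icc 0 r))
    (hsub : ∀ v ∈ Icc 0 r, ∀ x y, Pa α S v (x - y) = Pa α S v x - Pa α S v y) 
    {t : ℝ} (htr : t ≤ r) {f : ℝ → X} (hf : ContinuousOn f (Icc 0 t)) :
    ContinuousOn (fun s => Pa α S (t - s) (f s)) (Icc 0 t) := by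
  have hmaps : MapsTo (fun s => t - s) (Icc 0 t) (Icc 0 r) := fun s hs => 
    ⟨by linarith [hs.2], by linarith [hs.1]⟩
  intro s hs
  have h1 : Tendsto (fun s' => Pa α S (t - s') (f s)) (𝓝[Icc 0 t] s) (𝓝 (Pa α S (t - s) (f s))) :=
    ((hc (f s)).comp (by fun_prop : ContinuousOn (fun s' => t - s') (Icc 0 t)) hmaps) s hs
  have h2 : Tendsto (fun s' => Pa α S (t - s') (f s' - f s)) (𝓝[Icc 0 t] s) (𝓝 0) := by
    have h3 : Tendsto (fun s' => M * ‖f s' - f s‖) (𝓝[Icc 0 t] s) (𝓝 0) := by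
      have : Tendsto (fun s' => M * ‖f s' - f s‖) (𝓝[Icc 0 t] s) (𝓝 (M * ‖f s - f s‖)) := 
        (((hf s hs).sub_const (f s)).norm).const_mul M
      simpa using this
    refine squeeze_zero_norm' ?_ h3
    filter_upwards [self_mem_nhdsWithin] with s' hs'
    exact hM _ (hmaps hs') _
  have h4 := h2.add h1
  rw [zero_add] at h4
  refine h4.congr' ?_
  filter_upwards [self_mem_nhdsWithin] with s' hs'
  rw [hsub _ (hmaps hs')]; simp

theorem aux_y_tendsto {α : ℝ} {S : ℝ → X →L[ℂ] X} {r M : ℝ} (hM0 : 0 ≤ M)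
    (hM : ∀ v ∈ Icc 0 r, ∀ x, ‖Pa α S v x‖ ≤ M * ‖x‖) 
    (hc : ∀ x, ContinuousOn (fun v => Pa α S v x) (Icc 0 r))
    (hsub : ∀ v ∈ Icc 0 r, ∀ x y, Pa α S v (x - y) = Pa α S v x - Pa α S v y) 
    {t : ℝ} (ht : 0 < t) (htr : t ≤ r) {f : ℝ → X} (hf : ContinuousOn f (Icc 0 t)) :
    Tendsto (fun p : ℕ × (ℕ → ℝ) × (ℕ → ℝ) => ∑ i ∈ Finset.range p.1, 
      ∫ s in (p.2.1 i)..(p.2.1 (i + 1)), Pa α S (t - s) (f (p.2.2 i))) (auxFil t)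
      (𝓝 (∫ s in (0:ℝ)..t, Pa α S (t - s) (f s))) := by
  rw [(auxFil_basis t).tendsto_iff Metric.nhds_basis_ball]
  intro ε hε
  have hu := isCompact_Icc.uniformContinuousOn_of_continuous hf
  rw [Metric.uniformContinuousOn_iff] at hu
  obtain ⟨δ, hδ, hu⟩ := hu (ε / ((M + 1) * t)) (by positivity)
  refine ⟨δ, hδ, fun p hp => ?_⟩
  obtain ⟨n, s, ξ⟩ := p
  obtain ⟨h0, hn, hs, hm, hξ⟩ := hp
  simp only at *
  have hsub' : ∀ i < n, Icc (s i) (s (i + 1)) ⊆ Icc 0 t := by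
    intro i hi
    apply Icc_subset_Icc
    · rw [← h0]; exact aux_le hs (Nat.zero_le i) hi.le
    · rw [← hn]; exact aux_le hs hi le_rfl
  have hi1 : ∀ i < n, IntervalIntegrable (fun σ => Pa α S (t - σ) (f σ)) volume (s i) (s (i+1)) := by
    intro i hi
    apply ContinuousOn.intervalIntegrable
    rw [uIcc_of_le (hs i hi).le]
    exact (aux_conv_cont hM hc hsub htr hf).mono (hsub' i hi)
  have hi2 : ∀ i < n, IntervalIntegrable (fun σ => Pa α S (t - σ) (f (ξ i))) volume 
      (s i) (s (i+1)) := by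
    intro i hi
    apply ContinuousOn.intervalIntegrable
    rw [uIcc_of_le (hs i hi).le]
    exact (aux_conv_cont hM hc hsub htr (continuousOn_const (c := f (ξ i)))).mono (hsub' i hi)
  have key : ∀ i ∈ Finset.range n, ‖(∫ σ in (s i)..(s (i + 1)), Pa α S (t - σ) (f (ξ i))) - 
      ∫ σ in (s i)..(s (i + 1)), Pa α S (t - σ) (f σ)‖ ≤ 
        M * (ε / ((M + 1) * t)) * (s (i + 1) - s i) := by
    intro i hi
    have hi := Finset.mem_range.1 hi
    rw [← intervalIntegral.integral_sub (hi2 i hi) (hi1 i hi), 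
      ← abs_of_pos (sub_pos.2 (hs i hi))]
    apply intervalIntegral.norm_integral_le_of_norm_le_const
    intro σ hσ
    rw [uIoc_of_le (hs i hi).le] at hσ
    have hσ' : σ ∈ Icc (s i) (s (i + 1)) := Ioc_subset_Icc_self hσ
    have hσt := hsub' i hi hσ'
    have htσ : t - σ ∈ Icc 0 r := ⟨by linarith [hσt.2], by linarith [hσt.1]⟩
    rw [← hsub _ htσ]
    refine (hM _ htσ _).trans ?_
    gcongr
    rw [← dist_eq_norm]
    refine (hu _ (hsub' i hi (hξ i hi)) _ hσt ?_).le
    have := hξ i hi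
    have := hm i hi
    rw [Real.dist_eq, abs_lt]
    constructor <;> linarith [hσ'.1, hσ'.2, (hξ i hi).1, (hξ i hi).2]
  have hsum := intervalIntegral.sum_integral_adjacent_intervals hi1
  rw [h0, hn] at hsum
  rw [Metric.mem_ball, dist_eq_norm, ← hsum, ← Finset.sum_sub_distrib]
  refine (norm_sum_le_of_le _ key).trans_lt ?_
  rw [← Finset.mul_sum, Finset.sum_range_sub, h0, hn, sub_zero]
  have : M * (ε / ((M + 1) * t)) * t = ε * (M / (M + 1)) := by field_simp
  rw [this]
  have : M / (M + 1) < 1 := by rw [div_lt_one (by linarith)]; linarith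
  nlinarith
end main

theorem stmt_5
    {X : Type*} [NormedAddCommGroup X] [NormedSpace ℂ X] [CompleteSpace X]
    (α : ℝ) (hα1 : 1 < α) (hα2 : α < 2)
    (A : X →ₗ.[ℂ] X) (hA_closed : IsClosed (A.graph : Set (X × X)))
    (hA_dense : Dense (A.domain : Set X))
    (S : ℝ → X →L[ℂ] X)
    (hS_cont : ∀ x : X, ContinuousOn (fun t => S t x) (Ici (0:ℝ)))
    (hS_zero : S 0 = 1)
    (hS_dom : ∀ t : ℝ, 0 ≤ t → ∀ x ∈ A.domain, S t x ∈ A.domain)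
    (hS_comm : ∀ t : ℝ, 0 ≤ t → ∀ x y : X, (x, y) ∈ A.graph → (S t x, S t y) ∈ A.graph)
    (hS_eq : ∀ t : ℝ, 0 ≤ t → ∀ x y : X, (x, y) ∈ A.graph →
      S t x = x + ∫ s in (0:ℝ)..t, g α (t - s) • S s y)
    (r : ℝ) (hr : 0 < r) (hsv : BoundedSemivariation S r)
    (f : ℝ → X) (hf : ContinuousOn f (Icc 0 r)) :
    ∀ t ∈ Icc (0:ℝ) r, ∃ z : X,
      ((∫ s in (0:ℝ)..t, Pa α S (t - s) (f s)), z) ∈ A.graph ∧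
      ∀ ε > 0, ∃ δ > 0, ∀ (n : ℕ) (s ξ : ℕ → ℝ),
        s 0 = 0 → s n = t → (∀ i < n, s i < s (i + 1)) →
        (∀ i < n, s (i + 1) - s i < δ) →
        (∀ i < n, ξ i ∈ Icc (s i) (s (i + 1))) →
        ‖z + ∑ i ∈ Finset.range n, (S (t - s (i + 1)) - S (t - s i)) (f (ξ i))‖ < ε := by
  intro t ht
  rcases ht.1.eq_or_lt with h | htpos
  · subst h
    refine ⟨0, by simpa using A.graph.zero_mem, fun ε hε => ⟨1, one_pos, ?_⟩⟩
    intro n s ξ h0 hn hs _ _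
    have : n = 0 := by
      rcases Nat.eq_zero_or_pos n with h | h
      · exact h
      · have h1 := hs 0 h
        have h2 := aux_le hs (show 0 + 1 ≤ n from h) le_rfl
        linarith
    subst this
    simpa using hε
  · have hf' : ContinuousOn f (Icc 0 t) := hf.mono (Icc_subset_Icc_right ht.2)
    have := auxFil_neBot htpos
    obtain ⟨M, hM0, hM, hc, hsub, hint⟩ := aux_Pa hα1 hS_cont hr
    have hgr := aux_graph hα1 A hA_closed hA_dense S hS_cont hS_comm hS_eq hM0 hM hc hsub hint
    obtain ⟨w, hw⟩ := aux_RS_tendsto hS_cont hsv htpos ht.2 hf'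
    have hy := aux_y_tendsto hM0 hM hc hsub htpos ht.2 hf'
    refine ⟨-w, ?_, ?_⟩
    · refine hA_closed.mem_of_tendsto (hy.prodMk_nhds hw.neg) ?_
      have h2 : ∀ᶠ p in auxFil t, AuxGood t 1 p := (auxFil_basis t).mem_of_mem one_pos
      filter_upwards [h2] with p hp
      obtain ⟨n, s, ξ⟩ := p
      obtain ⟨h0, hn, hs, hm, hξ⟩ := hp
      simp only [auxRS] at *
      have e : ((∑ i ∈ Finset.range n, ∫ σ in (s i)..(s (i + 1)), Pa α S (t - σ) (f (ξ i))),
          -∑ i ∈ Finset.range n, (S (t - s (i + 1)) - S (t - s i)) (f (ξ i))) = 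
          ∑ i ∈ Finset.range n, ((∫ σ in (s i)..(s (i + 1)), Pa α S (t - σ) (f (ξ i))), 
            -(S (t - s (i + 1)) - S (t - s i)) (f (ξ i))) := by
        ext <;> simp [Prod.fst_sum, Prod.snd_sum]
      show _ ∈ A.graph
      rw [e]
      apply A.graph.sum_mem
      intro i hi
      have hi := Finset.mem_range.1 hi
      have hsi : 0 ≤ s i := by rw [← h0]; exact aux_le hs (Nat.zero_le i) hi.le
      have hsi' : s (i + 1) ≤ t := by rw [← hn]; exact aux_le hs hi le_rfl
      have hlt := hs i hi
      have ha : t - s i ∈ Icc 0 r := ⟨by linarith, by linarith [ht.2]⟩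
      have hb : t - s (i + 1) ∈ Icc 0 r := ⟨by linarith, by linarith [ht.2]⟩
      have hii : ∀ u ∈ Icc 0 r, IntervalIntegrable (fun v => Pa α S v (f (ξ i))) volume 0 u := by
        intro u hu
        apply ContinuousOn.intervalIntegrable
        rw [uIcc_of_le hu.1]
        exact (hc _).mono (Icc_subset_Icc_right hu.2)
      have := A.graph.sub_mem (hgr _ ha (f (ξ i))) (hgr _ hb (f (ξ i)))
      rw [Prod.mk_sub_mk, intervalIntegral.integral_interval_sub_left (hii _ ha) (hii _ hb)] at this
      rw [intervalIntegral.integral_comp_sub_left (fun v => Pa α S v (f (ξ i)))]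
      convert this using 2
      simp
    · intro ε hε
      obtain ⟨δ, hδ, h⟩ := ((auxFil_basis t).tendsto_iff Metric.nhds_basis_ball).1 hw ε hε
      refine ⟨δ, hδ, fun n s ξ h0 hn hs hm hξ => ?_⟩
      have := h (n, s, ξ) ⟨h0, hn, hs, hm, hξ⟩
      rw [Metric.mem_ball, dist_eq_norm] at this
      rw [neg_add_eq_sub]
      exact this
end

section
/- Let A generate an α-times resolvent family {S_α(t)}_{t≥0} on X, where 1 < α < 2, let r > 0, and let f : [0,r] → X be continuous. If v ∈ C([0,r];X) satisfies (g_α*v)(t) ∈ D(A) and v(t) = A((g_α*v)(t)) + (g_α*f)(t) for all t ∈ [0,r] (i.e. v is a mild solution of D_t^α u = Au + f with u(0) = u'(0) = 0), then v(t) = (P_α*f)(t) = ∫_0^t P_α(t−s)f(s) ds for all t ∈ [0,r]. -/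
open MeasureTheory Set

section aux
variable {X : Type*} [NormedAddCommGroup X] [NormedSpace ℝ X]

theorem aux_fub {t : ℝ} (ht : 0 ≤ t) (κ1 κ2 : ℝ → ℝ)
    (h1 : IntervalIntegrable κ1 volume 0 t) (h2 : IntervalIntegrable κ2 volume 0 t)
    (G : ℝ → ℝ → X) (hG : Continuous (fun p : ℝ × ℝ => G p.1 p.2)) :
    ∫ s in (0:ℝ)..t, ∫ σ in s..t, (κ1 s * κ2 σ) • G s σ
      = ∫ σ in (0:ℝ)..t, ∫ s in (0:ℝ)..σ, (κ1 s * κ2 σ) • G s σ := by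
  rw [intervalIntegrable_iff_integrableOn_Ioc_of_le ht] at h1 h2
  set F : ℝ × ℝ → X := {p : ℝ × ℝ | p.1 < p.2}.indicator
    (fun p => (κ1 p.1 * κ2 p.2) • G p.1 p.2) with hF
  have hint : Integrable F ((volume.restrict (Ioc 0 t)).prod (volume.restrict (Ioc 0 t))) := by
    apply Integrable.indicator _ (measurableSet_lt measurable_fst measurable_snd)
    obtain ⟨C, hC⟩ := ((isCompact_Icc (a := (0:ℝ)) (b := t)).prod
      (isCompact_Icc (a := (0:ℝ)) (b := t))).exists_bound_of_continuousOn hG.continuousOn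
    have hk := Integrable.mul_prod (f := κ1) (g := κ2) h1 h2
    refine Integrable.mono' (hk.norm.mul_const C) (hk.aestronglyMeasurable.smul
      hG.aestronglyMeasurable) ?_
    rw [Measure.prod_restrict]
    refine (ae_restrict_iff' (measurableSet_Ioc.prod measurableSet_Ioc)).2 (ae_of_all _ ?_)
    rintro ⟨a, b⟩ ⟨ha, hb⟩
    rw [norm_smul]
    exact mul_le_mul_of_nonneg_left
      (hC (a, b) ⟨Ioc_subset_Icc_self ha, Ioc_subset_Icc_self hb⟩) (norm_nonneg _)
  have hsw := integral_integral_swap (f := fun a b => F (a, b)) hint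
  rw [intervalIntegral.integral_of_le ht, intervalIntegral.integral_of_le ht]
  convert hsw using 1
  · refine setIntegral_congr_fun measurableSet_Ioc (fun s hs => ?_)
    have : (fun b => F (s, b)) = (Ioi s).indicator (fun σ => (κ1 s * κ2 σ) • G s σ) := by
      ext b; simp [hF, indicator]
    simp only [this]
    rw [setIntegral_indicator measurableSet_Ioi, intervalIntegral.integral_of_le hs.2]
    congr 2
    ext x; simp only [mem_inter_iff, mem_Ioc, mem_Ioi]
    constructor
    · rintro ⟨h, h'⟩; exact ⟨⟨hs.1.trans h, h'⟩, h⟩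
    · rintro ⟨h, h'⟩; exact ⟨h', h.2⟩
  · refine setIntegral_congr_fun measurableSet_Ioc (fun s hs => ?_)
    have : (fun b => F (b, s)) = (Iio s).indicator (fun σ => (κ1 σ * κ2 s) • G σ s) := by
      ext b; simp [hF, indicator]
    simp only [this]
    rw [setIntegral_indicator measurableSet_Iio, intervalIntegral.integral_of_le hs.1.le,
      integral_Ioc_eq_integral_Ioo]
    congr 2
    ext x; simp only [mem_inter_iff, mem_Ioc, mem_Iio, mem_Ioo]
    constructor
    · rintro ⟨h, h'⟩; exact ⟨⟨h, h'.le.trans hs.2⟩, h'⟩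
    · rintro ⟨h, h'⟩; exact ⟨h.1, h'⟩

theorem aux_inj [CompleteSpace X] {r : ℝ} (h : ℝ → X) (hc : Continuous h)
    (h0 : ∀ t ∈ Icc (0:ℝ) r, ∫ s in (0:ℝ)..t, h s = 0) (hr : 0 < r) :
    ∀ t ∈ Icc (0:ℝ) r, h t = 0 := by
  have hd : ∀ t, HasDerivAt (fun t => ∫ s in (0:ℝ)..t, h s) (h t) t := fun t =>
    intervalIntegral.integral_hasDerivAt_right (hc.intervalIntegrable _ _)
      hc.aestronglyMeasurable.stronglyMeasurableAtFilter hc.continuousAt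
  intro t ht
  have h1 := (hd t).hasDerivWithinAt (s := Icc 0 r)
  have h2 : HasDerivWithinAt (fun t => ∫ s in (0:ℝ)..t, h s) 0 (Icc 0 r) t :=
    (hasDerivWithinAt_const t (Icc 0 r) (0:X)).congr (fun x hx => h0 x hx) (h0 t ht)
  exact (uniqueDiffOn_Icc hr t ht).eq_deriv _ h1 h2

theorem aux_joint [CompleteSpace X] (Φ : ℝ → X →L[ℝ] X) (h : ∀ x, Continuous (fun t => Φ t x)) :
    Continuous (fun p : ℝ × X => Φ p.1 p.2) := by
  rw [continuous_iff_continuousAt]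
  rintro ⟨t0, x0⟩
  obtain ⟨C, hC⟩ : ∃ C, ∀ i : Icc (t0 - 1) (t0 + 1), ‖Φ i‖ ≤ C := by
    apply banach_steinhaus
    intro x
    obtain ⟨C, hC⟩ := (isCompact_Icc (a := t0 - 1) (b := t0 + 1)).exists_bound_of_continuousOn
      (h x).continuousOn
    exact ⟨C, fun i => hC i i.2⟩
  have e : (fun p : ℝ × X => Φ p.1 p.2) = fun p => Φ p.1 (p.2 - x0) + Φ p.1 x0 := by
    ext p; simp
  rw [e]
  have h2 : ContinuousAt (fun p : ℝ × X => Φ p.1 x0) (t0, x0) :=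
    ((h x0).comp continuous_fst).continuousAt
  refine ContinuousAt.add ?_ h2
  unfold ContinuousAt
  simp only [sub_self, map_zero]
  have hz : Filter.Tendsto (fun p : ℝ × X => C * ‖p.2 - x0‖) (nhds (t0, x0)) (nhds 0) := by
    have : Continuous (fun p : ℝ × X => C * ‖p.2 - x0‖) := by fun_prop
    simpa using this.tendsto (t0, x0)
  refine squeeze_zero_norm' ?_ hz
  have hn : ∀ᶠ p : ℝ × X in nhds (t0, x0), p.1 ∈ Icc (t0 - 1) (t0 + 1) :=
    continuous_fst.continuousAt.eventually (Icc_mem_nhds (by simp) (by simp))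
  filter_upwards [hn] with p hp
  exact (Φ p.1).le_of_opNorm_le (hC ⟨p.1, hp⟩) _

theorem aux_g_cont {β : ℝ} (h : 1 ≤ β) : Continuous (g β) := by
  unfold g
  exact (Real.continuous_rpow_const (by linarith)).div_const _

theorem aux_g_int {β : ℝ} (h : 0 < β) (a b : ℝ) : IntervalIntegrable (g β) volume a b := by
  unfold g
  exact (intervalIntegral.intervalIntegrable_rpow' (by linarith)).div_const _

theorem aux_g_one (t : ℝ) : g 1 t = 1 := by simp [g]

theorem aux_g_two (t : ℝ) : g 2 t = t := by
  have : (2:ℝ) - 1 = 1 := by norm_num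
  simp [g, this]

theorem aux_g_succ {β : ℝ} (h : 0 < β) (t : ℝ) :
    ∫ τ in (0:ℝ)..t, g β (t - τ) = g (β + 1) t := by
  rw [intervalIntegral.integral_comp_sub_left (fun x => g β x)]
  simp only [g, sub_self, sub_zero, intervalIntegral.integral_div]
  rw [integral_rpow (Or.inl (by linarith)), Real.Gamma_add_one h.ne']
  simp only [sub_add_cancel, add_sub_cancel_right, Real.zero_rpow h.ne', sub_zero]
  field_simp

theorem aux_beta {a b : ℝ} (ha : 0 < a) (hb : 0 < b) {t : ℝ} (ht : 0 < t) :
    ∫ τ in (0:ℝ)..t, g b (t - τ) * g a τ = g (a + b) t := by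
  have h1 := Complex.betaIntegral_scaled (a : ℂ) (b : ℂ) ht
  have h2 := Complex.Gamma_mul_Gamma_eq_betaIntegral (s := (a:ℂ)) (t := (b:ℂ)) (by simpa) (by simpa)
  have h3 : ∫ x in (0:ℝ)..t, (x : ℂ) ^ ((a:ℂ) - 1) * ((t : ℂ) - x) ^ ((b:ℂ) - 1)
      = ((∫ x in (0:ℝ)..t, x ^ (a - 1) * (t - x) ^ (b - 1) : ℝ) : ℂ) := by
    rw [← intervalIntegral.integral_ofReal]
    refine intervalIntegral.integral_congr (fun x hx => ?_)
    rw [uIcc_of_le ht.le] at hx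
    push_cast
    rw [Complex.ofReal_cpow hx.1, Complex.ofReal_cpow (by linarith [hx.2])]
    push_cast; rfl
  have hΓ : (Real.Gamma (a + b)) ≠ 0 := (Real.Gamma_pos_of_pos (by linarith)).ne'
  have hΓa : (Real.Gamma a) ≠ 0 := (Real.Gamma_pos_of_pos (by linarith)).ne'
  have hΓb : (Real.Gamma b) ≠ 0 := (Real.Gamma_pos_of_pos (by linarith)).ne'
  have h4 : Real.Gamma (a + b) * (∫ x in (0:ℝ)..t, x ^ (a - 1) * (t - x) ^ (b - 1))
      = t ^ (a + b - 1) * (Real.Gamma a * Real.Gamma b) := by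
    have : ((Real.Gamma (a + b) * (∫ x in (0:ℝ)..t, x ^ (a - 1) * (t - x) ^ (b - 1)) : ℝ) : ℂ)
      = ((t ^ (a + b - 1) * (Real.Gamma a * Real.Gamma b) : ℝ) : ℂ) := by
      rw [Complex.ofReal_mul, ← h3, h1, Complex.ofReal_mul, Complex.ofReal_cpow ht.le,
        Complex.ofReal_mul, ← Complex.Gamma_ofReal, ← Complex.Gamma_ofReal,
        ← Complex.Gamma_ofReal, h2]
      push_cast; ring
    exact_mod_cast this
  have h5 : ∫ τ in (0:ℝ)..t, g b (t - τ) * g a τ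
      = (∫ x in (0:ℝ)..t, x ^ (a - 1) * (t - x) ^ (b - 1)) / (Real.Gamma a * Real.Gamma b) := by
    rw [← intervalIntegral.integral_div]
    congr 1; ext x; simp only [g]; field_simp
  rw [h5, g]
  field_simp
  linarith

noncomputable def auxcv (k : ℝ → ℝ) (u : ℝ → X) (t : ℝ) : X := ∫ s in (0:ℝ)..t, k (t - s) • u s

noncomputable def auxCv (Φ : ℝ → X →L[ℝ] X) (u : ℝ → X) (t : ℝ) : X :=
  ∫ s in (0:ℝ)..t, Φ (t - s) (u s)

theorem aux_cv_cont {k : ℝ → ℝ} {u : ℝ → X} (hk : Continuous k) (hu : Continuous u) :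
    Continuous (auxcv k u) := by
  unfold auxcv
  exact intervalIntegral.continuous_parametric_intervalIntegral_of_continuous
    (f := fun t s => k (t - s) • u s) (by fun_prop) continuous_id

theorem aux_Cv_cont {Φ : ℝ → X →L[ℝ] X} {u : ℝ → X}
    (hΦ : Continuous (fun p : ℝ × X => Φ p.1 p.2)) (hu : Continuous u) :
    Continuous (auxCv Φ u) := by
  unfold auxCv
  refine intervalIntegral.continuous_parametric_intervalIntegral_of_continuous
    (f := fun t s => Φ (t - s) (u s)) ?_ continuous_id
  exact hΦ.comp (f := fun p : ℝ × ℝ => (p.1 - p.2, u p.2)) (by fun_prop)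

theorem aux_A {k : ℝ → ℝ} {Φ : ℝ → X →L[ℝ] X} {u : ℝ → X} {t : ℝ} (ht : 0 ≤ t)
    (hk : IntervalIntegrable k volume 0 t)
    (hΦ : Continuous (fun p : ℝ × X => Φ p.1 p.2)) (hu : Continuous u) :
    ∫ s in (0:ℝ)..t, ∫ τ in (0:ℝ)..(t - s), k (t - s - τ) • Φ τ (u s)
      = auxcv k (auxCv Φ u) t := by
  have h := aux_fub ht (fun _ => 1) (fun σ => k (t - σ)) (by simp)
    (by simpa using (hk.comp_sub_left t).symm) (fun s σ => Φ (σ - s) (u s))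
    (hΦ.comp (f := fun p : ℝ × ℝ => (p.2 - p.1, u p.1)) (by fun_prop))
  unfold auxcv auxCv
  convert h using 1
  · congr 1; ext s
    have := intervalIntegral.integral_comp_sub_right (a := s) (b := t)
      (fun τ => k (t - s - τ) • Φ τ (u s)) s
    rw [sub_self] at this
    rw [← this]
    congr 1; ext σ
    rw [one_mul, show t - s - (σ - s) = t - σ by ring]
  · congr 1; ext σ
    rw [← intervalIntegral.integral_smul]
    simp

theorem aux_B [CompleteSpace X] {k : ℝ → ℝ} {Φ : ℝ → X →L[ℝ] X} {u : ℝ → X} {t : ℝ} (ht : 0 ≤ t)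
    (hk : Continuous k)
    (hΦ : Continuous (fun p : ℝ × X => Φ p.1 p.2)) (hu : Continuous u) :
    ∫ s in (0:ℝ)..t, ∫ τ in (0:ℝ)..(t - s), k (t - s - τ) • Φ τ (u s)
      = auxCv Φ (auxcv k u) t := by
  have h := aux_fub ht (fun _ => 1) (fun _ => 1) (by simp)
    (by simp) (fun s σ => k (σ - s) • Φ (t - σ) (u s))
    (by
      have := hΦ.comp (f := fun p : ℝ × ℝ => (t - p.2, u p.1)) (by fun_prop)
      exact Continuous.smul (by fun_prop) this)
  unfold auxcv auxCv
  convert h using 1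
  · congr 1; ext s
    have := intervalIntegral.integral_comp_sub_left (a := s) (b := t)
      (fun τ => k (t - s - τ) • Φ τ (u s)) t
    rw [sub_self] at this
    rw [← this]
    congr 1; ext σ
    rw [one_mul, one_smul, show t - s - (t - σ) = σ - s by ring]
  · congr 1; ext σ
    rw [← ContinuousLinearMap.intervalIntegral_comp_comm]
    · simp
    · exact Continuous.intervalIntegrable (by fun_prop) _ _

theorem aux_AB [CompleteSpace X] {k : ℝ → ℝ} {Φ : ℝ → X →L[ℝ] X} {u : ℝ → X} {t : ℝ}
    (ht : 0 ≤ t) (hk : Continuous k)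
    (hΦ : Continuous (fun p : ℝ × X => Φ p.1 p.2)) (hu : Continuous u) :
    auxCv Φ (auxcv k u) t = auxcv k (auxCv Φ u) t := by
  rw [← aux_A ht (hk.intervalIntegrable _ _) hΦ hu, aux_B ht hk hΦ hu]

theorem aux_comm (k : ℝ → ℝ) (u : ℝ → X) (t : ℝ) :
    auxcv k u t = ∫ s in (0:ℝ)..t, k s • u (t - s) := by
  have := intervalIntegral.integral_comp_sub_left (a := 0) (b := t)
      (fun τ => k (t - τ) • u τ) t
  simp only [sub_self, sub_zero, sub_sub_cancel] at this
  rw [this]; rfl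

theorem aux_D {k : ℝ → ℝ} {u : ℝ → X} {t : ℝ} (ht : 0 ≤ t)
    (hk : IntervalIntegrable k volume 0 t) (hu : Continuous u) :
    ∫ σ in (0:ℝ)..t, auxcv k u σ = auxcv k (fun σ => ∫ s in (0:ℝ)..σ, u s) t := by
  have h := aux_fub ht k (fun _ => 1) hk (by simp) (fun s σ => u (σ - s)) (by fun_prop)
  rw [aux_comm]
  simp only [aux_comm]
  convert h.symm using 1
  · simp
  · congr 1; ext s
    simp only [mul_one, intervalIntegral.integral_smul]
    rw [intervalIntegral.integral_comp_sub_right, sub_self]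

/-- `g_β * g_γ * u` via kernels. -/
theorem aux_E [CompleteSpace X] {k : ℝ → ℝ} {l : ℝ → ℝ} {u : ℝ → X} {t : ℝ} (ht : 0 ≤ t)
    (hk : IntervalIntegrable k volume 0 t) (hl : Continuous l) (hu : Continuous u)
    (m : ℝ → ℝ) (hm : ∀ x, 0 < x → ∫ τ in (0:ℝ)..x, k (x - τ) * l τ = m x) :
    auxcv k (auxcv l u) t = auxcv m u t := by
  have h := aux_A (Φ := fun τ => l τ • ContinuousLinearMap.id ℝ X) ht hk
    (by simpa using (by fun_prop : Continuous (fun p : ℝ × X => l p.1 • p.2))) hu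
  have e : auxCv (fun τ => l τ • ContinuousLinearMap.id ℝ X) u = auxcv l u := by
    ext t; simp [auxCv, auxcv]
  rw [← e, ← h, auxcv]
  rw [intervalIntegral.integral_of_le ht, intervalIntegral.integral_of_le ht,
    integral_Ioc_eq_integral_Ioo, integral_Ioc_eq_integral_Ioo]
  refine setIntegral_congr_fun measurableSet_Ioo (fun s hs => ?_)
  simp only [_root_.smul_apply, ContinuousLinearMap.id_apply, smul_smul]
  rw [intervalIntegral.integral_smul_const, hm _ (by linarith [hs.2])]

theorem aux_one (u : ℝ → X) : auxcv (fun _ => 1) u = fun t => ∫ s in (0:ℝ)..t, u s := by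
  ext t; simp [auxcv]

theorem aux_congr {k : ℝ → ℝ} {u w : ℝ → X} {t : ℝ} (ht : 0 ≤ t)
    (h : ∀ s ∈ Icc 0 t, u s = w s) : auxcv k u t = auxcv k w t := by
  unfold auxcv
  refine intervalIntegral.integral_congr (fun s hs => ?_)
  rw [uIcc_of_le ht] at hs
  simp only [h s hs]

theorem aux_q [CompleteSpace X] {k : ℝ → ℝ} {u : ℝ → X} {r : ℝ} (hr : 0 ≤ r)
    (hk : IntervalIntegrable k volume 0 r) (hu : Continuous u) (hu0 : u 0 = 0) :
    ∃ q : ℝ → X, Continuous q ∧ ∀ t ∈ Icc 0 r, q t = auxcv k u t := by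
  obtain ⟨C, hC⟩ := (isCompact_Icc (a := 0) (b := r)).exists_bound_of_continuousOn
      hu.continuousOn
  refine ⟨fun t => ∫ s in (0:ℝ)..r, k s • u (projIcc 0 r hr (t - s)), ?_, ?_⟩
  · refine intervalIntegral.continuous_of_dominated_interval
      (bound := fun s => ‖k s‖ * C) ?_ ?_ (hk.norm.mul_const C) ?_
    · intro x
      have hm : AEStronglyMeasurable k (volume.restrict (uIoc 0 r)) := hk.def'.aestronglyMeasurable
      refine hm.smul (Continuous.aestronglyMeasurable ?_)
      have := continuous_projIcc (a := 0) (b := r) (h := hr)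
      fun_prop
    · intro x
      refine ae_of_all _ (fun s _ => ?_)
      rw [norm_smul]
      exact mul_le_mul_of_nonneg_left (hC _ (projIcc 0 r hr _).2) (norm_nonneg _)
    · refine ae_of_all _ (fun s _ => ?_)
      have := continuous_projIcc (a := 0) (b := r) (h := hr)
      fun_prop
  · intro t ht
    rw [aux_comm]
    have hb : IntervalIntegrable (fun s => k s • u (projIcc 0 r hr (t - s))) volume 0 r := by
      have := continuous_projIcc (a := 0) (b := r) (h := hr)
      exact hk.smul_continuousOn (Continuous.continuousOn (by fun_prop))
    beta_reduce
    rw [← intervalIntegral.integral_add_adjacent_intervals (b := t)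
      (hb.mono_set (by rw [uIcc_of_le hr, uIcc_of_le ht.1]; exact Icc_subset_Icc le_rfl ht.2))
      (hb.mono_set (by rw [uIcc_of_le hr, uIcc_of_le ht.2]; exact Icc_subset_Icc ht.1 le_rfl))]
    have e1 : ∫ s in t..r, k s • u (projIcc 0 r hr (t - s)) = 0 := by
      rw [intervalIntegral.integral_congr (g := fun _ => (0:X))]
      · simp
      · intro s hs
        rw [uIcc_of_le ht.2] at hs
        simp only
        rw [projIcc_of_le_left hr (by linarith [hs.1]), hu0, smul_zero]
    rw [e1, add_zero]
    refine intervalIntegral.integral_congr (fun s hs => ?_)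
    rw [uIcc_of_le ht.1] at hs
    rw [projIcc_of_mem hr ⟨by linarith [hs.2], by linarith [hs.1, ht.2]⟩]

end aux

theorem stmt_7
    {X : Type*} [NormedAddCommGroup X] [NormedSpace ℂ X] [CompleteSpace X]
    (α : ℝ) (hα1 : 1 < α) (hα2 : α < 2)
    (A : X →ₗ.[ℂ] X) (hA_closed : IsClosed (A.graph : Set (X × X)))
    (hA_dense : Dense (A.domain : Set X))
    (S : ℝ → X →L[ℂ] X)
    (hS_cont : ∀ x : X, ContinuousOn (fun t => S t x) (Ici (0:ℝ)))
    (hS_zero : S 0 = 1)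
    (hS_dom : ∀ t : ℝ, 0 ≤ t → ∀ x ∈ A.domain, S t x ∈ A.domain)
    (hS_comm : ∀ t : ℝ, 0 ≤ t → ∀ x y : X, (x, y) ∈ A.graph → (S t x, S t y) ∈ A.graph)
    (hS_eq : ∀ t : ℝ, 0 ≤ t → ∀ x y : X, (x, y) ∈ A.graph →
      S t x = x + ∫ s in (0:ℝ)..t, g α (t - s) • S s y)
    (r : ℝ) (hr : 0 < r) (f : ℝ → X) (hf : ContinuousOn f (Icc 0 r))
    (v : ℝ → X) (hv : ContinuousOn v (Icc 0 r))
    (hmild : ∀ t ∈ Icc (0:ℝ) r,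
      ((∫ s in (0:ℝ)..t, g α (t - s) • v s),
        v t - ∫ s in (0:ℝ)..t, g α (t - s) • f s) ∈ A.graph) :
    ∀ t ∈ Icc (0:ℝ) r, v t = ∫ s in (0:ℝ)..t, Pa α S (t - s) (f s) := by
  have hα0 : 0 < α - 1 := by linarith
  -- global continuous extensions
  set P : ℝ → X →L[ℝ] X := fun τ => (S (max τ 0)).restrictScalars ℝ with hP
  have hPS : ∀ τ, 0 ≤ τ → ∀ x, P τ x = S τ x := by
    intro τ hτ x; simp [hP, max_eq_left hτ]
  have hΦ : Continuous (fun p : ℝ × X => P p.1 p.2) := by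
    apply aux_joint
    intro x
    exact (hS_cont x).comp_continuous (f := fun τ : ℝ => max τ 0) (by fun_prop)
      (fun τ => mem_Ici.2 (le_max_right _ _))
  set f' : ℝ → X := IccExtend hr.le (domRestrict (Icc 0 r) f) with hf'
  have hfc : Continuous f' := hf.domRestrict.Icc_extend'
  have hff : ∀ t ∈ Icc (0:ℝ) r, f' t = f t := fun t ht => IccExtend_of_mem hr.le _ ht
  set v' : ℝ → X := IccExtend hr.le (domRestrict (Icc 0 r) v) with hv'
  have hvc : Continuous v' := hv.domRestrict.Icc_extend'
  have hvv : ∀ t ∈ Icc (0:ℝ) r, v' t = v t := fun t ht => IccExtend_of_mem hr.le _ ht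
  have hga : Continuous (g α) := aux_g_cont hα1.le
  set z := auxcv (g α) f' with hz
  have hzc : Continuous z := aux_cv_cont hga hfc
  set w := auxcv (g α) v' with hw
  have hwc : Continuous w := aux_cv_cont hga hvc
  have hgr : ∀ t ∈ Icc (0:ℝ) r, (w t, v' t - z t) ∈ A.graph := by
    intro t ht
    have hsub : ∀ s ∈ Icc 0 t, s ∈ Icc 0 r := fun s hs => ⟨hs.1, hs.2.trans ht.2⟩
    have h1 : w t = auxcv (g α) v t := aux_congr ht.1 (fun s hs => hvv s (hsub s hs))
    have h2 : z t = auxcv (g α) f t := aux_congr ht.1 (fun s hs => hff s (hsub s hs))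
    rw [h1, h2, hvv t ht]
    exact hmild t ht
  have hPc : ∀ (u : ℝ → X), Continuous u → ∀ t, Continuous (fun s => P (t - s) (u s)) :=
    fun u hu t => hΦ.comp (f := fun s : ℝ => (t - s, u s)) (by fun_prop)
  -- step 1
  have step1 : ∀ t ∈ Icc (0:ℝ) r, ∫ s in (0:ℝ)..t, w s = auxCv P (auxcv (g α) z) t := by
    intro t ht
    have e1 : auxCv P w t - ∫ s in (0:ℝ)..t, w s
        = ∫ s in (0:ℝ)..t, ∫ τ in (0:ℝ)..(t - s), g α (t - s - τ) • P τ (v' s - z s) := by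
      unfold auxCv
      rw [← intervalIntegral.integral_sub ((hPc w hwc t).intervalIntegrable _ _)
        (hwc.intervalIntegrable _ _)]
      refine intervalIntegral.integral_congr (fun s hs => ?_)
      rw [uIcc_of_le ht.1] at hs
      have h0 : 0 ≤ t - s := by linarith [hs.2]
      have h1 := hS_eq (t - s) h0 _ _ (hgr s ⟨hs.1, hs.2.trans ht.2⟩)
      rw [hPS _ h0, h1, add_sub_cancel_left]
      refine intervalIntegral.integral_congr (fun τ hτ => ?_)
      rw [uIcc_of_le h0] at hτ
      simp only [hPS _ hτ.1]
    rw [aux_B (u := fun s => v' s - z s) ht.1 hga hΦ (hvc.sub hzc)] at e1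
    have e2 : auxcv (g α) (fun s => v' s - z s) = fun s => w s - auxcv (g α) z s := by
      ext t
      simp only [hw, auxcv, smul_sub]
      rw [intervalIntegral.integral_sub] <;>
        exact Continuous.intervalIntegrable (by fun_prop) _ _
    have hy : Continuous (auxcv (g α) z) := aux_cv_cont hga hzc
    have e3 : auxCv P (fun s => w s - auxcv (g α) z s) t
        = auxCv P w t - auxCv P (auxcv (g α) z) t := by
      simp only [auxCv, map_sub]
      exact intervalIntegral.integral_sub ((hPc w hwc t).intervalIntegrable _ _)
        ((hPc _ hy t).intervalIntegrable _ _)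
    rw [e2, e3] at e1
    exact sub_right_injective e1
  set U := auxCv P f' with hU
  have hUc : Continuous U := aux_Cv_cont hΦ hfc
  have hU0 : U 0 = 0 := by simp [hU, auxCv]
  obtain ⟨q, hqc, hq⟩ := aux_q hr.le (aux_g_int hα0 0 r) hUc hU0
  -- `g_α * U = 1 * q`
  have step2 : ∀ t ∈ Icc (0:ℝ) r, auxcv (g α) U t = ∫ s in (0:ℝ)..t, q s := by
    intro t ht
    have e1 : ∫ s in (0:ℝ)..t, q s = ∫ s in (0:ℝ)..t, auxcv (g (α - 1)) U s := by
      refine intervalIntegral.integral_congr (fun s hs => ?_)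
      rw [uIcc_of_le ht.1] at hs
      exact hq s ⟨hs.1, hs.2.trans ht.2⟩
    rw [e1, aux_D ht.1 (aux_g_int hα0 0 t) hUc, ← aux_one]
    refine (aux_E ht.1 (aux_g_int hα0 0 t) continuous_const hUc _ (fun x _ => ?_)).symm
    simp only [mul_one]
    rw [aux_g_succ hα0, sub_add_cancel]
  set h : ℝ → X := fun t => v' t - q t with hh
  have hhc : Continuous h := hvc.sub hqc
  set H : ℝ → X := auxcv (fun _ => 1) h with hH
  have hHc : Continuous H := aux_cv_cont continuous_const hhc
  have step3 : ∀ t ∈ Icc (0:ℝ) r, auxcv (g α) H t = 0 := by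
    intro t ht
    have e1 : auxCv P (auxcv (g α) z) t = auxcv (g α) (fun t => ∫ s in (0:ℝ)..t, q s) t := by
      rw [aux_AB ht.1 hga hΦ hzc]
      refine aux_congr ht.1 (fun s hs => ?_)
      rw [hz, aux_AB hs.1 hga hΦ hfc]
      exact step2 s ⟨hs.1, hs.2.trans ht.2⟩
    have e2 := step1 t ht
    rw [e1, hw, aux_D ht.1 (hga.intervalIntegrable _ _) hvc] at e2
    have c1 : Continuous (fun t => ∫ s in (0:ℝ)..t, v' s) :=
      intervalIntegral.continuous_primitive (fun a b => hvc.intervalIntegrable a b) 0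
    have c2 : Continuous (fun t => ∫ s in (0:ℝ)..t, q s) :=
      intervalIntegral.continuous_primitive (fun a b => hqc.intervalIntegrable a b) 0
    have e3 : H = fun t => (∫ s in (0:ℝ)..t, v' s) - ∫ s in (0:ℝ)..t, q s := by
      rw [hH, aux_one]
      ext t
      exact intervalIntegral.integral_sub (hvc.intervalIntegrable _ _) (hqc.intervalIntegrable _ _)
    rw [e3, ← sub_eq_zero.2 e2]
    simp only [auxcv, smul_sub]
    rw [intervalIntegral.integral_sub] <;>
        exact Continuous.intervalIntegrable (by fun_prop) _ _
  have step4 : ∀ t ∈ Icc (0:ℝ) r, auxcv (fun _ => 1) (auxcv (fun _ => 1) H) t = 0 := by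
    intro t ht
    have h2 : 0 < 2 - α := by linarith
    have e1 : auxcv (g (2 - α)) (auxcv (g α) H) t = auxcv (g 2) H t := by
      refine aux_E ht.1 (aux_g_int h2 0 t) hga hHc _ (fun x hx => ?_)
      rw [aux_beta (by linarith) h2 hx]
      congr 1; ring
    have e2 : auxcv (fun _ => 1) (auxcv (fun _ => 1) H) t = auxcv (g 2) H t := by
      refine aux_E ht.1 (by simp) continuous_const hHc _ (fun x hx => ?_)
      simp [aux_g_two]
    rw [e2, ← e1, aux_congr (w := fun _ => (0:X)) ht.1
      (fun s hs => step3 s ⟨hs.1, hs.2.trans ht.2⟩)]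
    simp [auxcv]
  have hH1 : Continuous (auxcv (fun _ => 1) H) := aux_cv_cont continuous_const hHc
  have i1 := aux_inj _ hH1 (fun t ht => by simpa [aux_one] using step4 t ht) hr
  have i2 := aux_inj _ hHc (fun t ht => by simpa [aux_one] using i1 t ht) hr
  have i3 := aux_inj _ hhc (fun t ht => by simpa [hH, aux_one] using i2 t ht) hr
  intro t ht
  have e1 : v' t = q t := sub_eq_zero.1 (i3 t ht)
  rw [← hvv t ht, e1, hq t ht, ← aux_A ht.1 (aux_g_int hα0 0 t) hΦ hfc]
  refine intervalIntegral.integral_congr (fun s hs => ?_)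
  rw [uIcc_of_le ht.1] at hs
  have h0 : 0 ≤ t - s := by linarith [hs.2]
  simp only [Pa]
  refine intervalIntegral.integral_congr (fun τ hτ => ?_)
  rw [uIcc_of_le h0] at hτ
  simp only [hPS _ hτ.1, hff s ⟨hs.1, hs.2.trans ht.2⟩]
end
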